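/- arXiv:1605.01400 — 5 statements merged into one kernel-verified Lean document; each statement's English description precedes it below -/
import Mathlib

section
/- Let I ⊂ ℝ^d be a bounded open set and l ∈ ℕ. Let F be a positive continuous symmetric function on the set D_l(I) of l-tuples of pairwise distinct points of I, and let μ be a Borel probability measure on (ℝ^d)^l, invariant under permutations of the coordinates and concentrated on D_l(I), such that for every T ∈ 𝔊₀(I) the equality d(μ∘T)/dμ(𝐩) = F(T̂𝐩)/F(𝐩) holds for μ-almost every 𝐩, where (μ∘T)(A) = μ(T̂(A)). Then the same equality holds for every T ∈ 𝔊(I), and there exists a constant c > 0 such that μ(A) = c ∫_{A ∩ D_l(I)} F(𝐩) d𝐩 for every Borel set A ⊆ (ℝ^d)^l, where d𝐩 denotes Lebesgue measure on (ℝ^d)^l. -/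
open MeasureTheory Metric

/-- The data of an elementary cube exchange inside `I ⊆ ℝ^d`: finitely many pairwise
disjoint closed balls (cubes, for the sup-norm) `B(a_i,r_i)`, `B(a'_i,r_i)` contained
in `I`. -/
structure CubeExchangeData (d : ℕ) (I : Set (Fin d → ℝ)) where
  k : ℕ
  a : Fin k → Fin d → ℝ
  a' : Fin k → Fin d → ℝ
  r : Fin k → ℝ
  r_pos : ∀ i, 0 < r i
  disjoint : Pairwise (Function.onFun Disjoint
    (Sum.elim (fun i : Fin k => closedBall (a i) (r i))
      (fun i : Fin k => closedBall (a' i) (r i))))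
  subset : ∀ i, closedBall (a i) (r i) ⊆ I ∧ closedBall (a' i) (r i) ⊆ I

/-- A map `T : ℝ^d → ℝ^d` realizes the elementary cube exchange with data `D` if it
translates `B(a_i,r_i)` onto `B(a'_i,r_i)` and back, and is the identity elsewhere. -/
def CubeExchangeData.Realizes {d : ℕ} {I : Set (Fin d → ℝ)} (D : CubeExchangeData d I)
    (T : (Fin d → ℝ) → (Fin d → ℝ)) : Prop :=
  (∀ i, ∀ x ∈ closedBall (D.a i) (D.r i), T x = x + (D.a' i - D.a i)) ∧
  (∀ i, ∀ x ∈ closedBall (D.a' i) (D.r i), T x = x + (D.a i - D.a' i)) ∧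
  (∀ x, (∀ i, x ∉ closedBall (D.a i) (D.r i) ∧ x ∉ closedBall (D.a' i) (D.r i)) → T x = x)

/-- Rationality of the data: all centres have rational coordinates and all radii are
rational. -/
def CubeExchangeData.IsRational {d : ℕ} {I : Set (Fin d → ℝ)}
    (D : CubeExchangeData d I) : Prop :=
  (∀ i j, ∃ q : ℚ, D.a i j = (q : ℝ)) ∧ (∀ i j, ∃ q : ℚ, D.a' i j = (q : ℝ)) ∧
    (∀ i, ∃ q : ℚ, D.r i = (q : ℝ))

/-- The group `𝔊(I)` generated by all elementary cube exchanges with balls in `I`. -/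
def cubeExchangeGroup (d : ℕ) (I : Set (Fin d → ℝ)) : Subgroup (Equiv.Perm (Fin d → ℝ)) :=
  Subgroup.closure {T : Equiv.Perm (Fin d → ℝ) | ∃ D : CubeExchangeData d I, D.Realizes ⇑T}

/-- The countable subgroup `𝔊₀(I)` generated by elementary cube exchanges with rational
centres and radii. -/
def rationalCubeExchangeGroup (d : ℕ) (I : Set (Fin d → ℝ)) :
    Subgroup (Equiv.Perm (Fin d → ℝ)) :=
  Subgroup.closure
    {T : Equiv.Perm (Fin d → ℝ) |
      ∃ D : CubeExchangeData d I, D.IsRational ∧ D.Realizes ⇑T}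

/-- The set of `l`-tuples of pairwise distinct points of `I`. -/
def distinctTuples (d l : ℕ) (I : Set (Fin d → ℝ)) : Set (Fin l → Fin d → ℝ) :=
  {p | Function.Injective p ∧ ∀ i, p i ∈ I}

/-!
The measure `ν = F⁻¹ μ` is invariant under `𝔊₀(I)`. Exchanging small cubes about the points of two
disjoint configurations of distinct points shows that closed balls of the same small radius about
them have the same `ν`-mass: rational exchanges give this up to an arbitrarily small increase of
the radius, which continuity from above removes. Configurations sharing points are compared through
a third one. So the lower derivative of `ν` with respect to Lebesgue measure is constant on the open
set of configurations, and by the Besicovitch differentiation argument `ν` is a constant multiple of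
Lebesgue measure there. Lebesgue measure is invariant under all of `𝔊(I)`, and multiplying by `F`
gives back the quasi-invariance of `μ` under `𝔊(I)`.
-/

open Filter
open scoped ENNReal Topology

section LocalMeasure

variable {α : Type*} [TopologicalSpace α] [MeasurableSpace α] {μ ν : Measure α}

lemma exists_isOpen_subset_measure_lt_top {x : α} {U : Set α} (hU : IsOpen U) (hx : x ∈ U)
    (hμ : μ.FiniteAtFilter (𝓝 x)) (hν : ν.FiniteAtFilter (𝓝 x)) :
    ∃ W ⊆ U, IsOpen W ∧ x ∈ W ∧ μ W < ∞ ∧ ν W < ∞ := by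
  obtain ⟨V, hV, hfinite⟩ := eventually_smallSets.1 (hμ.eventually.and hν.eventually)
  obtain ⟨W, hW, hW_open, hxW⟩ := mem_nhds_iff.1 (inter_mem hV (hU.mem_nhds hx))
  exact ⟨W, hW.trans Set.inter_subset_right, hW_open, hxW,
    hfinite W (hW.trans Set.inter_subset_left)⟩

lemma restrict_eq_restrict_of_locally_eq [SecondCountableTopology α] {s : Set α}
    (h : ∀ x ∈ s, ∃ W ∈ 𝓝[s] x, μ.restrict W = ν.restrict W) :
    μ.restrict s = ν.restrict s := by
  choose! W hW hμν using h
  obtain ⟨t, hts, ht, hcover⟩ := TopologicalSpace.countable_cover_nhdsWithin hW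
  exact Measure.restrict_congr_mono hcover <|
    (Measure.restrict_biUnion_congr ht).2 fun x hx => hμν x (hts hx)

end LocalMeasure

section LowerDerivative

variable {α : Type*} [MetricSpace α] [MeasurableSpace α] {μ ν : Measure α} {c : ℝ≥0∞}

/-- The lower derivative at `x` of `ν` with respect to `μ` along closed balls. The junk values
of the quotient (`0 / 0 = 0`, `∞ / ∞ = 0`) concern only balls that are null or infinite for `μ`. -/
noncomputable def lowerDerivative (ν μ : Measure α) (x : α) : ℝ≥0∞ :=
  liminf (fun r => ν (closedBall x r) / μ (closedBall x r)) (𝓝[>] (0 : ℝ))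

lemma lowerDerivative_restrict_restrict {x : α} {U : Set α} (hU : U ∈ 𝓝 x) :
    lowerDerivative (ν.restrict U) (μ.restrict U) x = lowerDerivative ν μ x := by
  refine liminf_congr ?_
  filter_upwards [(eventually_closedBall_subset hU).filter_mono nhdsWithin_le_nhds] with r hr
  rw [Measure.restrict_eq_self _ hr, Measure.restrict_eq_self _ hr]

variable [BorelSpace α] [SecondCountableTopology α] [HasBesicovitchCovering α]

lemma measure_le_of_frequently_closedBall_le [SFinite μ] [IsLocallyFiniteMeasure ν] {s : Set α}
    (h : ∀ x ∈ s, ∃ᶠ r in 𝓝[>] (0 : ℝ), μ (closedBall x r) ≤ ν (closedBall x r)) :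
    μ s ≤ ν s :=
  (Besicovitch.vitaliFamily μ).measure_le_of_frequently_le ν .rfl s fun x hx =>
    (Besicovitch.tendsto_filterAt μ x).frequently (h x hx)

lemma mul_measure_le_of_le_lowerDerivative [SFinite μ] [IsLocallyFiniteMeasure ν] {s : Set α}
    (h : ∀ x ∈ s, c ≤ lowerDerivative ν μ x) : c * μ s ≤ ν s := by
  have mul_le_of_lt (q : ℝ≥0∞) (hq : q < c) : (q • μ) s ≤ ν s := by
    refine measure_le_of_frequently_closedBall_le fun x hx => Eventually.frequently ?_
    filter_upwards [eventually_lt_of_lt_liminf (hq.trans_le (h x hx))] with r hr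
    exact ENNReal.mul_le_of_le_div hr.le
  exact ENNReal.mul_le_of_forall_lt fun q hq m hm => (mul_le_mul_right hm.le q).trans <|
    mul_le_of_lt q hq

lemma measure_le_mul_of_lowerDerivative_le [SFinite ν] [IsFiniteMeasure μ] (hc : c ≠ ∞)
    {s : Set α} (h : ∀ x ∈ s, lowerDerivative ν μ x ≤ c) : ν s ≤ c * μ s := by
  have le_mul_of_lt (q : ℝ≥0∞) (hcq : c < q) (hq : q ≠ ∞) : ν s ≤ (q • μ) s := by
    have : IsFiniteMeasure (q • μ) := Measure.smul_finite μ hq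
    refine measure_le_of_frequently_closedBall_le fun x hx => ?_
    refine (frequently_lt_of_liminf_lt (by isBoundedDefault)
      ((h x hx).trans_lt hcq)).mono fun r hr => ?_
    exact (ENNReal.div_le_iff_le_mul (.inr hq) (.inr hcq.ne_bot)).1 hr.le
  refine ENNReal.le_mul_of_forall_lt (.inr (measure_ne_top μ s)) (.inl hc) fun q hq m hm => ?_
  obtain rfl | hq_top := eq_or_ne q ∞
  · rw [ENNReal.top_mul hm.ne_bot]
    exact le_top
  · exact (le_mul_of_lt q hq hq_top).trans (mul_le_mul_right hm.le q)

variable {U : Set α}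

lemma ne_top_of_forall_lowerDerivative_eq [μ.IsOpenPosMeasure] (hU : IsOpen U) {x : α}
    (hx : x ∈ U) (hμ : μ.FiniteAtFilter (𝓝 x)) (hν : ν.FiniteAtFilter (𝓝 x))
    (h : ∀ y ∈ U, lowerDerivative ν μ y = c) : c ≠ ∞ := by
  rintro rfl
  obtain ⟨W, hWU, hW_open, hxW, hμW, hνW⟩ := exists_isOpen_subset_measure_lt_top hU hx hμ hν
  have : Fact (μ W < ∞) := ⟨hμW⟩
  have : Fact (ν W < ∞) := ⟨hνW⟩
  have top_mul_le : ∞ * μ.restrict W W ≤ ν.restrict W W :=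
    mul_measure_le_of_le_lowerDerivative fun y hy => by
      rw [lowerDerivative_restrict_restrict (hW_open.mem_nhds hy), h y (hWU hy)]
  rw [Measure.restrict_apply_self, Measure.restrict_apply_self,
    ENNReal.top_mul (hW_open.measure_pos μ ⟨x, hxW⟩).ne'] at top_mul_le
  exact hνW.not_ge top_mul_le

lemma restrict_eq_smul_restrict_of_measure_lt_top (hU : IsOpen U) (hμU : μ U < ∞)
    (hνU : ν U < ∞) (hc : c ≠ ∞) (h : ∀ x ∈ U, lowerDerivative ν μ x = c) :
    ν.restrict U = c • μ.restrict U := by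
  have : Fact (μ U < ∞) := ⟨hμU⟩
  have : Fact (ν U < ∞) := ⟨hνU⟩
  ext s hs
  have lowerDerivative_eq (x : α) (hx : x ∈ s ∩ U) :
      lowerDerivative (ν.restrict U) (μ.restrict U) x = c := by
    rw [lowerDerivative_restrict_restrict (hU.mem_nhds hx.2), h x hx.2]
  rw [Measure.smul_apply, smul_eq_mul, Measure.restrict_apply hs, Measure.restrict_apply hs,
    ← Measure.restrict_eq_self ν Set.inter_subset_right,
    ← Measure.restrict_eq_self μ Set.inter_subset_right]
  exact (measure_le_mul_of_lowerDerivative_le hc fun x hx => (lowerDerivative_eq x hx).le).antisymm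
    (mul_measure_le_of_le_lowerDerivative fun x hx => (lowerDerivative_eq x hx).ge)

theorem restrict_eq_smul_restrict_of_lowerDerivative_eq (hU : IsOpen U)
    (hμ : ∀ x ∈ U, μ.FiniteAtFilter (𝓝 x)) (hν : ∀ x ∈ U, ν.FiniteAtFilter (𝓝 x))
    (hc : c ≠ ∞) (h : ∀ x ∈ U, lowerDerivative ν μ x = c) :
    ν.restrict U = c • μ.restrict U := by
  rw [← Measure.restrict_smul]
  refine restrict_eq_restrict_of_locally_eq fun x hx => ?_
  obtain ⟨W, hWU, hW_open, hxW, hμW, hνW⟩ :=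
    exists_isOpen_subset_measure_lt_top hU hx (hμ x hx) (hν x hx)
  refine ⟨W, mem_nhdsWithin_of_mem_nhds (hW_open.mem_nhds hxW), ?_⟩
  rw [Measure.restrict_smul]
  exact restrict_eq_smul_restrict_of_measure_lt_top hW_open hμW hνW hc fun y hy => h y (hWU hy)

end LowerDerivative

section QuasiInvariance

variable {X Y : Type*} [MeasurableSpace X] [MeasurableSpace Y]

lemma map_withDensity_comp_equiv (μ : Measure X) (e : X ≃ᵐ Y) (g : Y → ℝ≥0∞) :
    (μ.withDensity (g ∘ e)).map e = (μ.map e).withDensity g := by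
  ext A hA
  rw [e.map_apply, withDensity_apply _ (e.measurable hA), withDensity_apply _ hA,
    e.restrict_map, lintegral_map_equiv]
  rfl

lemma withDensity_withDensity_inv_cancel {μ : Measure X} {f : X → ℝ≥0∞} (hf : AEMeasurable f μ)
    (hf_zero : ∀ᵐ x ∂μ, f x ≠ 0) (hf_top : ∀ᵐ x ∂μ, f x ≠ ∞) :
    (μ.withDensity f⁻¹).withDensity f = μ := by
  simpa only [Pi.inv_apply, inv_inv] using withDensity_inv_same₀ hf.inv
    (hf_top.mono fun _ hx => ENNReal.inv_ne_zero.2 hx)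
    (hf_zero.mono fun _ hx => ENNReal.inv_ne_top.2 hx)

theorem map_symm_eq_withDensity_div_iff {μ : Measure X} {f : X → ℝ≥0∞} (e : X ≃ᵐ X)
    (hf : AEMeasurable f μ) (hf_zero : ∀ᵐ x ∂μ, f x ≠ 0) (hf_top : ∀ᵐ x ∂μ, f x ≠ ∞)
    (hfe : AEMeasurable (f ∘ e) μ) (hfe_zero : ∀ᵐ x ∂μ, f (e x) ≠ 0)
    (hfe_top : ∀ᵐ x ∂μ, f (e x) ≠ ∞) :
    μ.map e.symm = μ.withDensity (fun x => f (e x) / f x) ↔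
      (μ.withDensity f⁻¹).map e.symm = μ.withDensity f⁻¹ := by
  have comp_comp_symm (g : X → ℝ≥0∞) : (g ∘ e) ∘ e.symm = g := by
    funext x
    simp only [Function.comp_apply, e.apply_symm_apply]
  have map_symm_withDensity (ρ : Measure X) (g : X → ℝ≥0∞) :
      (ρ.withDensity g).map e.symm = (ρ.map e.symm).withDensity (g ∘ e) := by
    rw [← map_withDensity_comp_equiv, comp_comp_symm]
  constructor <;> intro h
  · have div_aemeasurable : AEMeasurable (fun x => f (e x) / f x) μ := hfe.div hf
    have inv_comp_aemeasurable : AEMeasurable (f⁻¹ ∘ e) μ := hfe.inv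
    rw [map_symm_withDensity, h, ← withDensity_mul₀ div_aemeasurable inv_comp_aemeasurable]
    refine withDensity_congr_ae ?_
    filter_upwards [hfe_zero, hfe_top] with x hx_zero hx_top
    simp only [Pi.mul_apply, Pi.inv_apply, Function.comp_apply]
    rw [div_eq_mul_inv, mul_right_comm, ENNReal.mul_inv_cancel hx_zero hx_top, one_mul]
  · rw [← withDensity_withDensity_inv_cancel hf hf_zero hf_top, map_symm_withDensity, h,
      withDensity_withDensity_inv_cancel hf hf_zero hf_top, ← withDensity_mul₀ hf.inv hfe]
    refine withDensity_congr_ae (ae_of_all _ fun x => ?_)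
    simp only [Pi.mul_apply, Pi.inv_apply, Function.comp_apply]
    rw [div_eq_mul_inv, mul_comm]

lemma finiteAtFilter_withDensity {μ : Measure X} [TopologicalSpace X] [OpensMeasurableSpace X]
    {x : X} (hμ : μ.FiniteAtFilter (𝓝 x)) {g : X → ℝ≥0∞} {M : ℝ≥0∞} (hM : M ≠ ∞)
    (hg : ∀ᶠ y in 𝓝 x, g y ≤ M) : (μ.withDensity g).FiniteAtFilter (𝓝 x) := by
  obtain ⟨V, hV, hμV⟩ := hμ
  obtain ⟨W, hW, hW_open, hxW⟩ := mem_nhds_iff.1 (inter_mem hV hg)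
  refine ⟨W, hW_open.mem_nhds hxW, ?_⟩
  calc μ.withDensity g W = ∫⁻ y in W, g y ∂μ := withDensity_apply _ hW_open.measurableSet
    _ ≤ ∫⁻ _ in W, M ∂μ := setLIntegral_mono measurable_const fun y hy => (hW hy).2
    _ = M * μ W := setLIntegral_const W M
    _ < ∞ := ENNReal.mul_lt_top hM.lt_top
      ((measure_mono (hW.trans Set.inter_subset_left)).trans_lt hμV)

end QuasiInvariance

section Piecewise

variable {X ι : Type*} [MeasurableSpace X] {μ : Measure X}

theorem measurePreserving_of_piecewise [Countable ι] {T : X → X} (hT : Function.Bijective T)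
    {P : ι → Set X} (hP : ∀ i, MeasurableSet (P i)) (hP_disj : Pairwise (Function.onFun Disjoint P))
    (hP_cover : ⋃ i, P i = Set.univ) {e : ι → X ≃ᵐ X} (he : ∀ i, MeasurePreserving (e i) μ μ)
    (hTe : ∀ i, Set.EqOn T (e i) (P i)) : MeasurePreserving T μ μ := by
  have measurable_T : Measurable T := fun A hA => by
    have preimage_eq : T ⁻¹' A = ⋃ i, P i ∩ e i ⁻¹' A := by
      simp_rw [← (hTe _).inter_preimage_eq, ← Set.iUnion_inter, hP_cover, Set.univ_inter]
    rw [preimage_eq]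
    exact .iUnion fun i => (hP i).inter ((e i).measurable hA)
  have map_restrict (i : ι) : (μ.restrict (P i)).map T = μ.restrict (T '' P i) := by
    rw [(hTe i).image_eq, ← ((he i).restrict_image_emb (e i).measurableEmbedding (P i)).map_eq]
    exact Measure.map_congr ((ae_restrict_mem (hP i)).mono (hTe i))
  have image_disj : Pairwise (Function.onFun Disjoint fun i => T '' P i) := fun i j hij =>
    (Set.disjoint_image_iff hT.injective).2 (hP_disj hij)
  have measurableSet_image (i : ι) : MeasurableSet (T '' P i) := by
    rw [(hTe i).image_eq]
    exact (e i).measurableEmbedding.measurableSet_image.2 (hP i)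
  refine ⟨measurable_T, ?_⟩
  calc μ.map T = (Measure.sum fun i => μ.restrict (P i)).map T := by
        rw [← Measure.restrict_iUnion hP_disj hP, hP_cover, Measure.restrict_univ]
    _ = Measure.sum fun i => μ.restrict (T '' P i) := by
        simp_rw [Measure.map_sum measurable_T.aemeasurable, map_restrict]
    _ = μ := by
        rw [← Measure.restrict_iUnion image_disj measurableSet_image, ← Set.image_iUnion, hP_cover,
          Set.image_univ, hT.surjective.range_eq, Measure.restrict_univ]

end Piecewise

lemma isOpen_setOf_injective {ι X : Type*} [Finite ι] [TopologicalSpace X] [T2Space X] :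
    IsOpen {p : ι → X | Function.Injective p} := by
  simp only [Function.injective_iff_pairwise_ne, Pairwise, Function.onFun, Set.ofPred_forall]
  exact isOpen_iInter_of_finite fun i => isOpen_iInter_of_finite fun j =>
    isOpen_iInter_of_finite fun _ => isOpen_ne_fun (continuous_apply i) (continuous_apply j)

section CubeExchange

variable {d l : ℕ} {I : Set (Fin d → ℝ)}

namespace CubeExchangeData

variable (D : CubeExchangeData d I)

/-- The pieces on which the exchange is a translation: `inl i` indexes `B(a_i, r_i)`, `inr i`
indexes `B(a'_i, r_i)`, and `none` the set of fixed points outside all these balls. -/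
def cell : Option (Fin D.k ⊕ Fin D.k) → Set (Fin d → ℝ)
  | none => {x | ∀ i, x ∉ closedBall (D.a i) (D.r i) ∧ x ∉ closedBall (D.a' i) (D.r i)}
  | some (.inl i) => closedBall (D.a i) (D.r i)
  | some (.inr i) => closedBall (D.a' i) (D.r i)

/-- The vector by which the exchange translates each of its cells. -/
def shift : Option (Fin D.k ⊕ Fin D.k) → Fin d → ℝ
  | none => 0
  | some (.inl i) => D.a' i - D.a i
  | some (.inr i) => D.a i - D.a' i

lemma realizes_iff {T : (Fin d → ℝ) → Fin d → ℝ} :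
    D.Realizes T ↔ ∀ s, ∀ x ∈ D.cell s, T x = x + D.shift s := by
  simp only [Realizes, Option.forall, Sum.forall, cell, shift, add_zero, Set.mem_ofPred_eq]
  tauto

lemma pairwise_disjoint_cell : Pairwise (Function.onFun Disjoint D.cell) := by
  have disjoint_none (s : Fin D.k ⊕ Fin D.k) : Disjoint (D.cell none) (D.cell (some s)) :=
    Set.disjoint_left.2 fun x hx hxs => match s with
      | .inl i => (hx i).1 hxs
      | .inr i => (hx i).2 hxs
  rintro (_ | s) (_ | t) hst
  · exact (hst rfl).elim
  · exact disjoint_none t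
  · exact (disjoint_none s).symm
  · have disjoint_balls := D.disjoint (fun h => hst (congrArg some h) : s ≠ t)
    rcases s with i | i <;> rcases t with j | j <;> exact disjoint_balls

lemma exists_mem_cell (x : Fin d → ℝ) : ∃ s, x ∈ D.cell s := by
  by_cases hx : x ∈ D.cell none
  · exact ⟨none, hx⟩
  · obtain ⟨i, hi⟩ := not_forall.1 hx
    obtain hi | hi := or_iff_not_and_not.2 hi
    · exact ⟨some (.inl i), hi⟩
    · exact ⟨some (.inr i), hi⟩

lemma measurableSet_cell (s : Option (Fin D.k ⊕ Fin D.k)) : MeasurableSet (D.cell s) := by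
  rcases s with _ | i | i
  · simp only [cell, Set.ofPred_forall, Set.ofPred_and]
    exact .iInter fun i => measurableSet_closedBall.compl.inter measurableSet_closedBall.compl
  · exact measurableSet_closedBall
  · exact measurableSet_closedBall

variable {D}

lemma add_shift_mem_cell {s : Option (Fin D.k ⊕ Fin D.k)} {x : Fin d → ℝ} (hx : x ∈ D.cell s) :
    x + D.shift s ∈ D.cell (s.map Sum.swap) := by
  rcases s with _ | i | i
  · rwa [shift, add_zero]
  all_goals
    rw [cell, mem_closedBall_iff_norm] at hx
    refine mem_closedBall_iff_norm.2 (le_of_eq_of_le (congrArg norm ?_) hx)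
    simp only [shift]
    abel

lemma shift_map_swap (s : Option (Fin D.k ⊕ Fin D.k)) :
    D.shift (s.map Sum.swap) = -D.shift s := by
  rcases s with _ | i | i <;> simp [shift]

lemma mem_of_mem_cell_some {s : Fin D.k ⊕ Fin D.k} {x : Fin d → ℝ}
    (hx : x ∈ D.cell (some s)) : x ∈ I := by
  rcases s with i | i
  · exact (D.subset i).1 hx
  · exact (D.subset i).2 hx

namespace Realizes

variable {T : (Fin d → ℝ) → Fin d → ℝ}

lemma involutive (hT : D.Realizes T) : Function.Involutive T := fun x => by
  obtain ⟨s, hs⟩ := D.exists_mem_cell x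
  rw [D.realizes_iff] at hT
  rw [hT s x hs, hT _ _ (add_shift_mem_cell hs), shift_map_swap, add_neg_cancel_right]

lemma mapsTo (hT : D.Realizes T) : Set.MapsTo T I I := fun x hx => by
  obtain ⟨s, hs⟩ := D.exists_mem_cell x
  rw [D.realizes_iff.1 hT s x hs]
  rcases s with _ | s
  · rwa [shift, add_zero]
  · exact mem_of_mem_cell_some (add_shift_mem_cell hs)

lemma measurePreserving (hT : D.Realizes T) : MeasurePreserving T volume volume :=
  measurePreserving_of_piecewise hT.involutive.bijective D.measurableSet_cell
    D.pairwise_disjoint_cell (Set.iUnion_eq_univ_iff.2 D.exists_mem_cell)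
    (e := fun s => MeasurableEquiv.addRight (D.shift s))
    (fun s => measurePreserving_add_right volume (D.shift s)) (D.realizes_iff.1 hT)

lemma preimage_closedBall_a (hT : D.Realizes T) (i : Fin D.k) :
    T ⁻¹' closedBall (D.a i) (D.r i) = closedBall (D.a' i) (D.r i) := by
  have mapsTo_a : Set.MapsTo T (D.cell (some (.inl i))) (D.cell (some (.inr i))) := fun x hx =>
    D.realizes_iff.1 hT _ x hx ▸ add_shift_mem_cell hx
  have mapsTo_a' : Set.MapsTo T (D.cell (some (.inr i))) (D.cell (some (.inl i))) := fun x hx =>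
    D.realizes_iff.1 hT _ x hx ▸ add_shift_mem_cell hx
  exact Set.Subset.antisymm (fun x hx => hT.involutive x ▸ mapsTo_a hx) mapsTo_a'

end Realizes

variable (D) in
lemma exists_perm_realizes : ∃ T : Equiv.Perm (Fin d → ℝ), D.Realizes T := by
  choose s hs using D.exists_mem_cell
  have realizes : D.Realizes fun x => x + D.shift (s x) := D.realizes_iff.2 fun t x hx => by
    rw [D.pairwise_disjoint_cell.eq (Set.not_disjoint_iff.2 ⟨x, hs x, hx⟩)]
  exact ⟨realizes.involutive.toPerm, realizes⟩

end CubeExchangeData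

lemma rationalCubeExchangeGroup_le : rationalCubeExchangeGroup d I ≤ cubeExchangeGroup d I :=
  Subgroup.closure_mono fun _ ⟨D, _, hT⟩ => ⟨D, hT⟩

lemma cubeExchangeGroup_induction {P : Equiv.Perm (Fin d → ℝ) → Prop}
    (realizes : ∀ (D : CubeExchangeData d I) (T : Equiv.Perm (Fin d → ℝ)), D.Realizes T → P T)
    (one : P 1) (mul : ∀ S T, P S → P T → P (S * T)) {T : Equiv.Perm (Fin d → ℝ)}
    (hT : T ∈ cubeExchangeGroup d I) : P T := by
  induction hT using Subgroup.closure_induction'' with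
  | one => exact one
  | mul S T _ _ hS hT => exact mul S T hS hT
  | mem T hT =>
    obtain ⟨D, hD⟩ := hT
    exact realizes D T hD
  | inv_mem T hT =>
    obtain ⟨D, hD⟩ := hT
    rw [T.inv_def, hD.involutive.symm_eq_self_of_involutive]
    exact realizes D T hD

variable {T : Equiv.Perm (Fin d → ℝ)}

lemma measurePreserving_of_mem_cubeExchangeGroup (hT : T ∈ cubeExchangeGroup d I) :
    MeasurePreserving T volume volume :=
  cubeExchangeGroup_induction (P := fun T => MeasurePreserving T volume volume)
    (fun _ _ hD => hD.measurePreserving) (.id volume) (fun _ _ hS hT => hS.comp hT) hT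

lemma mapsTo_of_mem_cubeExchangeGroup (hT : T ∈ cubeExchangeGroup d I) : Set.MapsTo T I I :=
  cubeExchangeGroup_induction (P := fun T => Set.MapsTo T I I)
    (fun _ _ hD => hD.mapsTo) (Set.mapsTo_id I) (fun _ _ hS hT => hS.comp hT) hT

lemma isOpen_distinctTuples (hI : IsOpen I) : IsOpen (distinctTuples d l I) := by
  simp only [distinctTuples, Set.ofPred_and, Set.ofPred_forall]
  exact isOpen_setOf_injective.inter <|
    isOpen_iInter_of_finite fun i => hI.preimage (continuous_apply i)

lemma comp_mem_distinctTuples (hT : T ∈ cubeExchangeGroup d I) {p : Fin l → Fin d → ℝ}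
    (hp : p ∈ distinctTuples d l I) : T ∘ p ∈ distinctTuples d l I :=
  ⟨T.injective.comp hp.1, fun i => mapsTo_of_mem_cubeExchangeGroup hT (hp.2 i)⟩

variable (l) in
/-- The coordinatewise map `T̂ (p_1, …, p_l) = (T p_1, …, T p_l)`. -/
def tupleEquiv (hT : T ∈ cubeExchangeGroup d I) :
    (Fin l → Fin d → ℝ) ≃ᵐ (Fin l → Fin d → ℝ) :=
  .piCongrRight fun _ =>
    ⟨T, (measurePreserving_of_mem_cubeExchangeGroup hT).measurable,
      (measurePreserving_of_mem_cubeExchangeGroup (inv_mem hT)).measurable⟩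

/-- Invariance of a measure on tuples under `T̂` for all `T` in a group of permutations, written
with `T⁻¹` because `A ↦ ν (T̂ A)` is the push-forward of `ν` under the inverse of `T̂`. -/
def TupleInvariant (G : Subgroup (Equiv.Perm (Fin d → ℝ))) (ν : Measure (Fin l → Fin d → ℝ)) :
    Prop :=
  ∀ T ∈ G, ν.map (fun p => ⇑T⁻¹ ∘ p) = ν

lemma tupleInvariant_volume_restrict (hI : IsOpen I) :
    TupleInvariant (cubeExchangeGroup d I) (volume.restrict (distinctTuples d l I)) := by
  intro T hT
  have preserves : MeasurePreserving (fun p : Fin l → Fin d → ℝ => ⇑T⁻¹ ∘ p) volume volume :=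
    volume_preserving_pi fun _ => measurePreserving_of_mem_cubeExchangeGroup (inv_mem hT)
  have preimage_eq : (fun p : Fin l → Fin d → ℝ => ⇑T⁻¹ ∘ p) ⁻¹' distinctTuples d l I =
      distinctTuples d l I := by
    refine Set.Subset.antisymm (fun p hp => ?_) fun p hp => comp_mem_distinctTuples (inv_mem hT) hp
    simpa [← Function.comp_assoc] using comp_mem_distinctTuples hT hp
  simpa only [preimage_eq] using
    (preserves.restrict_preimage (isOpen_distinctTuples hI).measurableSet).map_eq

end CubeExchange

section DisjointBalls

variable {ι κ E : Type*} {r : ℝ}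

/-- The closed balls of radius `r` about the points of the family `x` are pairwise disjoint and
contained in `I`. -/
def DisjointClosedBallsIn [PseudoMetricSpace E] (I : Set E) (x : ι → E) (r : ℝ) : Prop :=
  Pairwise (Function.onFun Disjoint fun i => closedBall (x i) r) ∧ ∀ i, closedBall (x i) r ⊆ I

namespace DisjointClosedBallsIn

section

variable [PseudoMetricSpace E] {I : Set E} {x y : ι → E}

lemma comp_injective (h : DisjointClosedBallsIn I x r) {f : κ → ι} (hf : Function.Injective f) :
    DisjointClosedBallsIn I (x ∘ f) r :=
  ⟨h.1.comp_of_injective hf, fun i => h.2 (f i)⟩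

lemma mono {s : ℝ} (h : DisjointClosedBallsIn I x r) (hxy : ∀ i, s + dist (y i) (x i) ≤ r) :
    DisjointClosedBallsIn I y s := by
  have subset (i : ι) : closedBall (y i) s ⊆ closedBall (x i) r :=
    closedBall_subset_closedBall' (hxy i)
  exact ⟨fun i j hij => (h.1 hij).mono (subset i) (subset j), fun i => (subset i).trans (h.2 i)⟩

end

lemma eventually [MetricSpace E] [Finite ι] {I : Set E} (hI : IsOpen I) {x : ι → E}
    (hx : Function.Injective x) (hxI : ∀ i, x i ∈ I) :
    ∀ᶠ r in 𝓝[>] (0 : ℝ), DisjointClosedBallsIn I x r := by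
  have eventually_disjoint (i j : ι) (hij : i ≠ j) :
      ∀ᶠ r in 𝓝[>] (0 : ℝ), Disjoint (closedBall (x i) r) (closedBall (x j) r) := by
    have half_dist_pos : 0 < dist (x i) (x j) / 2 := half_pos (dist_pos.2 (hx.ne hij))
    filter_upwards [Ioo_mem_nhdsGT half_dist_pos] with r hr
    exact closedBall_disjoint_closedBall (by linarith [hr.2])
  refine .and ?_ ?_
  · simp only [Pairwise, eventually_all]
    exact eventually_disjoint
  · exact eventually_all.2 fun i =>
      (eventually_closedBall_subset (hI.mem_nhds (hxI i))).filter_mono nhdsWithin_le_nhds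

end DisjointClosedBallsIn

end DisjointBalls

section InvariantMeasure

variable {d l : ℕ} {I : Set (Fin d → ℝ)} {p q : Fin l → Fin d → ℝ} {r R : ℝ}
  {ν : Measure (Fin l → Fin d → ℝ)}

/-- The exchange of the balls `B(p_i, r)` and `B(q_i, r)` about the points of two tuples. -/
def CubeExchangeData.ofTuples (hr : 0 < r) (h : DisjointClosedBallsIn I (Sum.elim p q) r) :
    CubeExchangeData d I where
  k := l
  a := p
  a' := q
  r := fun _ => r
  r_pos := fun _ => hr
  disjoint := Sum.comp_elim (closedBall · r) p q ▸ h.1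
  subset := fun i => ⟨h.2 (.inl i), h.2 (.inr i)⟩

lemma measure_closedBall_eq_of_rational (hν : TupleInvariant (rationalCubeExchangeGroup d I) ν)
    (hp : ∀ i j, ∃ a : ℚ, p i j = a) (hq : ∀ i j, ∃ a : ℚ, q i j = a) {r : ℚ} (hr : 0 < (r : ℝ))
    (h : DisjointClosedBallsIn I (Sum.elim p q) (r : ℝ)) :
    ν (closedBall p r) = ν (closedBall q r) := by
  obtain ⟨T, hT⟩ := (CubeExchangeData.ofTuples hr h).exists_perm_realizes
  have mem_rational : T⁻¹ ∈ rationalCubeExchangeGroup d I :=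
    inv_mem (Subgroup.subset_closure ⟨_, ⟨hp, hq, fun _ => ⟨r, rfl⟩⟩, hT⟩)
  have mem_group := inv_mem (rationalCubeExchangeGroup_le mem_rational)
  have preimage_closedBall : tupleEquiv l mem_group ⁻¹' closedBall p r = closedBall q r := by
    rw [closedBall_pi _ hr.le, closedBall_pi _ hr.le]
    exact congrArg (Set.univ.pi ·) (funext hT.preimage_closedBall_a)
  calc ν (closedBall p r) = ν.map (tupleEquiv l mem_group) (closedBall p r) :=
        congrArg (· (closedBall p r)) (hν T⁻¹ mem_rational).symm
    _ = ν (closedBall q r) := by rw [MeasurableEquiv.map_apply, preimage_closedBall]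

lemma exists_rational_dist_lt {ι κ : Type*} [Fintype ι] [Fintype κ] (p : ι → κ → ℝ) {ε : ℝ}
    (hε : 0 < ε) : ∃ p' : ι → κ → ℝ, (∀ i j, ∃ a : ℚ, p' i j = a) ∧ dist p' p < ε := by
  choose a ha using fun i j => Rat.denseRange_cast.exists_dist_lt (p i j) hε
  refine ⟨fun i j => a i j, fun i j => ⟨a i j, rfl⟩, ?_⟩
  simp only [dist_pi_lt_iff hε]
  exact fun i j => dist_comm (p i j) _ ▸ ha i j

lemma measure_closedBall_le_of_add_le (hν : TupleInvariant (rationalCubeExchangeGroup d I) ν)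
    (hr : 0 < r) {ε : ℝ} (hε : 0 < ε) (hrR : r + ε ≤ R)
    (h : DisjointClosedBallsIn I (Sum.elim p q) R) :
    ν (closedBall p r) ≤ ν (closedBall q (r + ε)) := by
  obtain ⟨p', hp', hpp'⟩ := exists_rational_dist_lt p (show 0 < ε / 4 by linarith)
  obtain ⟨q', hq', hqq'⟩ := exists_rational_dist_lt q (show 0 < ε / 4 by linarith)
  obtain ⟨s, hrs, hsε⟩ := exists_rat_btwn (show r + ε / 4 < r + ε / 2 by linarith)
  have disjoint_near : DisjointClosedBallsIn I (Sum.elim p' q') (s : ℝ) := h.mono <| by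
    rintro (i | i)
    · exact (add_le_add_right (dist_le_pi_dist p' p i) _).trans (by linarith)
    · exact (add_le_add_right (dist_le_pi_dist q' q i) _).trans (by linarith)
  calc ν (closedBall p r) ≤ ν (closedBall p' s) :=
        measure_mono (closedBall_subset_closedBall' (by rw [dist_comm]; linarith))
    _ = ν (closedBall q' s) :=
        measure_closedBall_eq_of_rational hν hp' hq' (by linarith) disjoint_near
    _ ≤ ν (closedBall q (r + ε)) := measure_mono (closedBall_subset_closedBall' (by linarith))

lemma measure_closedBall_le_of_disjoint (hν : TupleInvariant (rationalCubeExchangeGroup d I) ν)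
    (hr : 0 < r) (hrR : r < R) (h : DisjointClosedBallsIn I (Sum.elim p q) R)
    (hq : ν (closedBall q R) ≠ ∞) : ν (closedBall p r) ≤ ν (closedBall q r) := by
  have tendsto_measure : Tendsto (fun ε => ν (cthickening ε (closedBall q r))) (𝓝 0)
      (𝓝 (ν (closedBall q r))) := by
    refine tendsto_measure_cthickening_of_isClosed ⟨R - r, sub_pos.2 hrR, ?_⟩ isClosed_closedBall
    rwa [cthickening_closedBall (sub_pos.2 hrR).le hr.le, sub_add_cancel]
  refine ge_of_tendsto (tendsto_measure.mono_left (nhdsWithin_le_nhds (s := Set.Ioi 0))) ?_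
  filter_upwards [Ioo_mem_nhdsGT (sub_pos.2 hrR)] with ε hε
  rw [cthickening_closedBall hε.1.le hr.le, add_comm]
  exact measure_closedBall_le_of_add_le hν hr hε.1 (by linarith [hε.2]) h

lemma eventually_measure_closedBall_ne_top {α : Type*} [PseudoMetricSpace α] [MeasurableSpace α]
    {μ : Measure α} {x : α} (hμ : μ.FiniteAtFilter (𝓝 x)) :
    ∀ᶠ r in 𝓝[>] (0 : ℝ), μ (closedBall x r) ≠ ∞ :=
  ((tendsto_closedBall_smallSets x).eventually hμ.eventually).filter_mono nhdsWithin_le_nhds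
    |>.mono fun _ hr => hr.ne

lemma eventually_measure_closedBall_eq_of_disjoint_range (hI : IsOpen I)
    (hν : TupleInvariant (rationalCubeExchangeGroup d I) ν)
    (hp : p ∈ distinctTuples d l I) (hq : q ∈ distinctTuples d l I)
    (hνp : ν.FiniteAtFilter (𝓝 p)) (hνq : ν.FiniteAtFilter (𝓝 q)) (hpq : ∀ i j, p i ≠ q j) :
    ∀ᶠ r in 𝓝[>] (0 : ℝ), ν (closedBall p r) = ν (closedBall q r) := by
  have eventually_disjoint : ∀ᶠ R in 𝓝[>] (0 : ℝ), DisjointClosedBallsIn I (Sum.elim p q) R :=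
    DisjointClosedBallsIn.eventually hI (hp.1.sumElim hq.1 hpq) (Sum.forall.2 ⟨hp.2, hq.2⟩)
  obtain ⟨R, hR, hνpR, hνqR, hR_pos⟩ := (eventually_disjoint.and <|
    (eventually_measure_closedBall_ne_top hνp).and <|
    (eventually_measure_closedBall_ne_top hνq).and self_mem_nhdsWithin).exists
  have hR_swap : DisjointClosedBallsIn I (Sum.elim q p) R :=
    Sum.elim_swap ▸ hR.comp_injective Sum.swap_leftInverse.injective
  filter_upwards [Ioo_mem_nhdsGT hR_pos] with r hr
  exact (measure_closedBall_le_of_disjoint hν hr.1 hr.2 hR hνqR).antisymm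
    (measure_closedBall_le_of_disjoint hν hr.1 hr.2 hR_swap hνpR)

lemma exists_mem_distinctTuples_forall_notMem [Nonempty (Fin d)] (hI : IsOpen I)
    (hI_nonempty : I.Nonempty) (l : ℕ) {s : Set (Fin d → ℝ)} (hs : s.Finite) :
    ∃ t ∈ distinctTuples d l I, ∀ i, t i ∉ s := by
  obtain ⟨x, hx⟩ := hI_nonempty
  have infinite : (I \ s).Infinite := (infinite_of_mem_nhds x (hI.mem_nhds hx)).sdiff hs
  have injective : Function.Injective fun i : Fin l => (infinite.natEmbedding _ i : Fin d → ℝ) :=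
    Subtype.val_injective.comp ((infinite.natEmbedding _).injective.comp Fin.val_injective)
  exact ⟨_, ⟨injective, fun i => (infinite.natEmbedding _ i).2.1⟩,
    fun i => (infinite.natEmbedding _ i).2.2⟩

lemma eventually_measure_closedBall_eq (hI : IsOpen I)
    (hν : TupleInvariant (rationalCubeExchangeGroup d I) ν)
    (hν_fin : ∀ p ∈ distinctTuples d l I, ν.FiniteAtFilter (𝓝 p))
    (hp : p ∈ distinctTuples d l I) (hq : q ∈ distinctTuples d l I) :
    ∀ᶠ r in 𝓝[>] (0 : ℝ), ν (closedBall p r) = ν (closedBall q r) := by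
  obtain hl | ⟨⟨i⟩⟩ := isEmpty_or_nonempty (Fin l)
  · exact .of_forall fun r => by rw [Subsingleton.elim p q]
  obtain hd | hd := isEmpty_or_nonempty (Fin d)
  · exact .of_forall fun r => by rw [Subsingleton.elim p q]
  obtain ⟨t, ht, ht_notMem⟩ := exists_mem_distinctTuples_forall_notMem hI ⟨p i, hp.2 i⟩ l
    ((Set.finite_range p).union (Set.finite_range q))
  have eventually_eq {x : Fin l → Fin d → ℝ} (hx : x ∈ distinctTuples d l I)
      (hxt : ∀ i j, x i ≠ t j) : ∀ᶠ r in 𝓝[>] (0 : ℝ), ν (closedBall x r) = ν (closedBall t r) :=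
    eventually_measure_closedBall_eq_of_disjoint_range hI hν hx ht (hν_fin x hx) (hν_fin t ht) hxt
  filter_upwards [eventually_eq hp fun i j h => ht_notMem j (.inl ⟨i, h⟩),
    eventually_eq hq fun i j h => ht_notMem j (.inr ⟨i, h⟩)] with r hpr hqr
  rw [hpr, hqr]

lemma lowerDerivative_eq_of_mem_distinctTuples (hI : IsOpen I)
    (hν : TupleInvariant (rationalCubeExchangeGroup d I) ν)
    (hν_fin : ∀ p ∈ distinctTuples d l I, ν.FiniteAtFilter (𝓝 p))
    (hp : p ∈ distinctTuples d l I) (hq : q ∈ distinctTuples d l I) :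
    lowerDerivative ν volume p = lowerDerivative ν volume q := by
  refine liminf_congr ?_
  filter_upwards [eventually_measure_closedBall_eq hI hν hν_fin hp hq] with r hr
  rw [hr, Measure.addHaar_closedBall_center volume p, Measure.addHaar_closedBall_center volume q]

theorem eq_smul_volume_of_tupleInvariant (hI : IsOpen I)
    (hν : TupleInvariant (rationalCubeExchangeGroup d I) ν)
    (hν_fin : ∀ p ∈ distinctTuples d l I, ν.FiniteAtFilter (𝓝 p))
    (hν_conc : ∀ᵐ p ∂ν, p ∈ distinctTuples d l I) (hν_ne : ν ≠ 0) :
    ∃ c : ℝ≥0∞, c ≠ 0 ∧ c ≠ ∞ ∧ ν = c • volume.restrict (distinctTuples d l I) := by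
  have : NeBot (ae ν) := ae_neBot.2 hν_ne
  obtain ⟨q, hq⟩ := hν_conc.exists
  have hΔ := isOpen_distinctTuples (l := l) hI
  have derivative_const : ∀ p ∈ distinctTuples d l I,
      lowerDerivative ν volume p = lowerDerivative ν volume q :=
    fun p hp => lowerDerivative_eq_of_mem_distinctTuples hI hν hν_fin hp hq
  have c_ne_top := ne_top_of_forall_lowerDerivative_eq hΔ hq (volume.finiteAt_nhds q)
    (hν_fin q hq) derivative_const
  have ν_eq := restrict_eq_smul_restrict_of_lowerDerivative_eq hΔ
    (fun p _ => volume.finiteAt_nhds p) hν_fin c_ne_top derivative_const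
  rw [Measure.restrict_eq_self_of_ae_mem hν_conc] at ν_eq
  refine ⟨_, fun c_eq_zero => hν_ne ?_, c_ne_top, ν_eq⟩
  rw [ν_eq, c_eq_zero, zero_smul]

end InvariantMeasure

section PositiveDensity

variable {X : Type*} [TopologicalSpace X] [MeasurableSpace X] [OpensMeasurableSpace X]
  {F : X → ℝ} {s : Set X} {μ : Measure X}

lemma aemeasurable_of_lowerSemicontinuousOn (hs : MeasurableSet s)
    (hF : LowerSemicontinuousOn F s) (hμ : ∀ᵐ x ∂μ, x ∈ s) : AEMeasurable F μ := by
  rw [← Measure.restrict_eq_self_of_ae_mem hμ]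
  exact aemeasurable_restrict_of_measurable_subtype hs
    (lowerSemicontinuous_restrict_iff.2 hF).measurable

lemma finiteAtFilter_withDensity_inv_ofReal {x : X} (hμ : μ.FiniteAtFilter (𝓝 x))
    (hF : LowerSemicontinuousAt F x) (hx : 0 < F x) :
    (μ.withDensity (fun y => ENNReal.ofReal (F y))⁻¹).FiniteAtFilter (𝓝 x) := by
  refine finiteAtFilter_withDensity hμ (M := (ENNReal.ofReal (F x / 2))⁻¹)
    (ENNReal.inv_ne_top.2 (ENNReal.ofReal_pos.2 (half_pos hx)).ne') ?_
  filter_upwards [hF (F x / 2) (half_lt_self hx)] with y hy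
  exact ENNReal.inv_le_inv.2 (ENNReal.ofReal_le_ofReal hy.le)

lemma map_symm_eq_withDensity_ofReal_div_iff (hs : MeasurableSet s) (hF_pos : ∀ x ∈ s, 0 < F x)
    (hF : LowerSemicontinuousOn F s) (hμ : ∀ᵐ x ∂μ, x ∈ s) (e : X ≃ᵐ X) (he : Set.MapsTo e s s) :
    μ.map e.symm = μ.withDensity (fun x => ENNReal.ofReal (F (e x) / F x)) ↔
      (μ.withDensity (fun x => ENNReal.ofReal (F x))⁻¹).map e.symm =
        μ.withDensity (fun x => ENNReal.ofReal (F x))⁻¹ := by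
  have ofReal_ne_zero {x : X} (hx : x ∈ s) : ENNReal.ofReal (F x) ≠ 0 :=
    (ENNReal.ofReal_pos.2 (hF_pos x hx)).ne'
  have map_mem : ∀ᵐ x ∂μ.map e, x ∈ s :=
    (ae_map_iff e.measurable.aemeasurable hs).2 (hμ.mono fun _ hx => he hx)
  have density_eq : (fun x => ENNReal.ofReal (F (e x) / F x)) =ᵐ[μ]
      fun x => ENNReal.ofReal (F (e x)) / ENNReal.ofReal (F x) :=
    hμ.mono fun x hx => ENNReal.ofReal_div_of_pos (hF_pos x hx)
  rw [withDensity_congr_ae density_eq]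
  exact map_symm_eq_withDensity_div_iff (f := fun x => ENNReal.ofReal (F x)) e
    (aemeasurable_of_lowerSemicontinuousOn hs hF hμ).ennreal_ofReal
    (hμ.mono fun _ hx => ofReal_ne_zero hx) (ae_of_all _ fun _ => ENNReal.ofReal_ne_top)
    ((aemeasurable_of_lowerSemicontinuousOn hs hF map_mem).ennreal_ofReal.comp_measurable
      e.measurable)
    (hμ.mono fun _ hx => ofReal_ne_zero (he hx)) (ae_of_all _ fun _ => ENNReal.ofReal_ne_top)

end PositiveDensity

section QuasiInvariantMeasure

variable {d l : ℕ} {I : Set (Fin d → ℝ)} {F : (Fin l → Fin d → ℝ) → ℝ}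
  {μ : Measure (Fin l → Fin d → ℝ)}

lemma map_tuple_eq_withDensity_iff (hI : IsOpen I) (hF_pos : ∀ p ∈ distinctTuples d l I, 0 < F p)
    (hF : LowerSemicontinuousOn F (distinctTuples d l I))
    (hμ_conc : ∀ᵐ p ∂μ, p ∈ distinctTuples d l I) {T : Equiv.Perm (Fin d → ℝ)}
    (hT : T ∈ cubeExchangeGroup d I) :
    μ.map (fun p => ⇑T⁻¹ ∘ p) = μ.withDensity (fun p => ENNReal.ofReal (F (⇑T ∘ p) / F p)) ↔
      (μ.withDensity (fun p => ENNReal.ofReal (F p))⁻¹).map (fun p => ⇑T⁻¹ ∘ p) =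
        μ.withDensity (fun p => ENNReal.ofReal (F p))⁻¹ :=
  map_symm_eq_withDensity_ofReal_div_iff (isOpen_distinctTuples hI).measurableSet hF_pos hF
    hμ_conc (tupleEquiv l hT) fun _ hp => comp_mem_distinctTuples hT hp

lemma exists_withDensity_inv_eq_smul_volume (hI : IsOpen I)
    (hF_pos : ∀ p ∈ distinctTuples d l I, 0 < F p)
    (hF : LowerSemicontinuousOn F (distinctTuples d l I)) (hμ_ne : μ ≠ 0)
    (hμ_fin : ∀ p ∈ distinctTuples d l I, μ.FiniteAtFilter (𝓝 p))
    (hμ_conc : ∀ᵐ p ∂μ, p ∈ distinctTuples d l I)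
    (hμ_qi : ∀ T ∈ rationalCubeExchangeGroup d I,
      μ.map (fun p => ⇑T⁻¹ ∘ p) =
        μ.withDensity (fun p => ENNReal.ofReal (F (⇑T ∘ p) / F p))) :
    ∃ c : ℝ≥0∞, c ≠ 0 ∧ c ≠ ∞ ∧ μ.withDensity (fun p => ENNReal.ofReal (F p))⁻¹ =
      c • volume.restrict (distinctTuples d l I) := by
  have hΔ := isOpen_distinctTuples (l := l) hI
  have hf : AEMeasurable (fun p => ENNReal.ofReal (F p)) μ :=
    (aemeasurable_of_lowerSemicontinuousOn hΔ.measurableSet hF hμ_conc).ennreal_ofReal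
  have hF_at (p) (hp : p ∈ distinctTuples d l I) : LowerSemicontinuousAt F p :=
    fun y hy => hΔ.nhdsWithin_eq hp ▸ hF p hp y hy
  refine eq_smul_volume_of_tupleInvariant hI
    (fun T hT => (map_tuple_eq_withDensity_iff hI hF_pos hF hμ_conc
      (rationalCubeExchangeGroup_le hT)).1 (hμ_qi T hT))
    (fun p hp => finiteAtFilter_withDensity_inv_ofReal (hμ_fin p hp) (hF_at p hp) (hF_pos p hp))
    ((withDensity_absolutelyContinuous μ _).ae_le hμ_conc) fun withDensity_eq_zero => hμ_ne ?_
  rw [withDensity_eq_zero_iff hf.inv] at withDensity_eq_zero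
  exact ae_eq_bot.1 <| eventually_false_iff_eq_bot.1 <| withDensity_eq_zero.mono fun _ hp =>
    ENNReal.inv_ne_zero.2 ENNReal.ofReal_ne_top hp

theorem quasi_invariant_measure_is_orthogonal_polynomial_type_general (hI : IsOpen I)
    (hF_pos : ∀ p ∈ distinctTuples d l I, 0 < F p)
    (hF : LowerSemicontinuousOn F (distinctTuples d l I)) (hμ_ne : μ ≠ 0)
    (hμ_fin : ∀ p ∈ distinctTuples d l I, μ.FiniteAtFilter (𝓝 p))
    (hμ_conc : ∀ᵐ p ∂μ, p ∈ distinctTuples d l I)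
    (hμ_qi : ∀ T ∈ rationalCubeExchangeGroup d I,
      μ.map (fun p => ⇑T⁻¹ ∘ p) =
        μ.withDensity (fun p => ENNReal.ofReal (F (⇑T ∘ p) / F p))) :
    (∀ T ∈ cubeExchangeGroup d I,
      μ.map (fun p => ⇑T⁻¹ ∘ p) =
        μ.withDensity (fun p => ENNReal.ofReal (F (⇑T ∘ p) / F p))) ∧
    ∃ c : ℝ, 0 < c ∧ ∀ A : Set (Fin l → Fin d → ℝ), MeasurableSet A →
      μ A = ∫⁻ p in A ∩ distinctTuples d l I, ENNReal.ofReal (c * F p) ∂volume := by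
  obtain ⟨c, hc_zero, hc_top, hc⟩ :=
    exists_withDensity_inv_eq_smul_volume hI hF_pos hF hμ_ne hμ_fin hμ_conc hμ_qi
  refine ⟨fun T hT => ?_, c.toReal, ENNReal.toReal_pos hc_zero hc_top, fun A hA => ?_⟩
  · rw [map_tuple_eq_withDensity_iff hI hF_pos hF hμ_conc hT, hc, Measure.map_smul,
      tupleInvariant_volume_restrict hI T hT]
  · have μ_eq := withDensity_withDensity_inv_cancel
      (aemeasurable_of_lowerSemicontinuousOn (isOpen_distinctTuples hI).measurableSet hF
        hμ_conc).ennreal_ofReal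
      (hμ_conc.mono fun p hp => (ENNReal.ofReal_pos.2 (hF_pos p hp)).ne')
      (ae_of_all _ fun _ => ENNReal.ofReal_ne_top)
    rw [← μ_eq, hc, withDensity_smul_measure, Measure.smul_apply, withDensity_apply _ hA,
      Measure.restrict_restrict hA, smul_eq_mul, ← lintegral_const_mul' _ _ hc_top]
    simp_rw [ENNReal.ofReal_mul ENNReal.toReal_nonneg, ENNReal.ofReal_toReal hc_top]

end QuasiInvariantMeasure

/-- Let `I ⊂ ℝ^d` be bounded open, `F` a positive continuous symmetric
function on the `l`-tuples of distinct points of `I`, and `μ` a symmetric Borel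
probability measure concentrated on such tuples, such that for every `T ∈ 𝔊₀(I)` the
measure `μ∘T : A ↦ μ(T̂ A)` has density `F(T̂𝐩)/F(𝐩)` with respect to `μ`.  Then the same
holds for every `T ∈ 𝔊(I)`, and `μ` is a positive constant multiple of `F(𝐩) d𝐩` on the
distinct tuples. -/
theorem quasi_invariant_measure_is_orthogonal_polynomial_type
    (d l : ℕ) (I : Set (Fin d → ℝ)) (hI_open : IsOpen I) (hI_bdd : Bornology.IsBounded I)
    (F : (Fin l → Fin d → ℝ) → ℝ)
    (hF_pos : ∀ p ∈ distinctTuples d l I, 0 < F p)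
    (hF_cont : ContinuousOn F (distinctTuples d l I))
    (hF_symm : ∀ (σ : Equiv.Perm (Fin l)) (p : Fin l → Fin d → ℝ), F (p ∘ ⇑σ) = F p)
    (μ : Measure (Fin l → Fin d → ℝ)) [IsProbabilityMeasure μ]
    (hμ_symm : ∀ σ : Equiv.Perm (Fin l), μ.map (fun p => p ∘ ⇑σ) = μ)
    (hμ_conc : ∀ᵐ p ∂μ, p ∈ distinctTuples d l I)
    (hμ_qi : ∀ T ∈ rationalCubeExchangeGroup d I,
      μ.map (fun p => ⇑T⁻¹ ∘ p) =
        μ.withDensity (fun p => ENNReal.ofReal (F (⇑T ∘ p) / F p))) :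
    (∀ T ∈ cubeExchangeGroup d I,
      μ.map (fun p => ⇑T⁻¹ ∘ p) =
        μ.withDensity (fun p => ENNReal.ofReal (F (⇑T ∘ p) / F p))) ∧
    ∃ c : ℝ, 0 < c ∧ ∀ A : Set (Fin l → Fin d → ℝ), MeasurableSet A →
      μ A = ∫⁻ p in A ∩ distinctTuples d l I, ENNReal.ofReal (c * F p) ∂volume := by
  exact quasi_invariant_measure_is_orthogonal_polynomial_type_general hI_open hF_pos
    hF_cont.lowerSemicontinuousOn (IsProbabilityMeasure.ne_zero μ) (fun p _ => μ.finiteAt_nhds p)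
    hμ_conc hμ_qi
end

section
/- Let S and Q be standard Borel spaces, let μ be a Borel probability measure on S, let π : S → Q be a Borel map, and let (ν_q)_{q∈Q} be a disintegration of μ over π: a Borel family of probability measures on S such that ν_q(S ∖ π^{-1}{q}) = 0 for π_*μ-almost every q and μ(A) = ∫_Q ν_q(A) d(π_*μ)(q) for every Borel set A ⊆ S. Let T : S → S be a Borel bijection with π ∘ T = π, and suppose the measure μ∘T defined by (μ∘T)(A) = μ(T(A)) is absolutely continuous with respect to μ with d(μ∘T)/dμ = F holding μ-almost surely, for a Borel function F : S → [0,∞). Then for π_*μ-almost every q ∈ Q, the measure ν_q∘T (defined by (ν_q∘T)(A) = ν_q(T(A))) is absolutely continuous with respect to ν_q and d(ν_q∘T)/dν_q = F holds ν_q-almost surely. -/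
open MeasureTheory

/-!
That `κ` disintegrates `ρ` along `π` can be expressed by identities between measures: integrating
`κ q` over a measurable `B ⊆ Q` gives `ρ` on `π ⁻¹' B`. In this form it is visibly stable under
pushforward along maps that preserve the fibers of `π` and under multiplication by a density.
So if `μ.map g = μ.withDensity f`, then `q ↦ (ν q).map g` and `q ↦ (ν q).withDensity f` are two
disintegrations of the same measure, and essential uniqueness identifies them.
-/

open scoped ENNReal

theorem exists_countable_isPiSystem_generateFrom (S : Type*) [mS : MeasurableSpace S]
    [MeasurableSpace.CountablyGenerated S] :
    ∃ C : Set (Set S), C.Countable ∧ IsPiSystem C ∧ mS = MeasurableSpace.generateFrom C := by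
  refine ⟨generateSetAlgebra (MeasurableSpace.countableGeneratingSet S),
    countable_generateSetAlgebra (MeasurableSpace.countable_countableGeneratingSet),
    fun _ hs _ ht _ ↦ isSetAlgebra_generateSetAlgebra.inter_mem hs ht, ?_⟩
  rw [generateFrom_generateSetAlgebra_eq, MeasurableSpace.generateFrom_countableGeneratingSet]

theorem measure_inter_preimage_of_ae_eq {S Q : Type*} [MeasurableSpace S] {ρ : Measure S}
    {π : S → Q} {q : Q} (h : ∀ᵐ x ∂ρ, π x = q) (A : Set S) (B : Set Q) :
    ρ (A ∩ π ⁻¹' B) = B.indicator (fun _ ↦ ρ A) q := by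
  by_cases hqB : q ∈ B
  · rw [Set.indicator_of_mem hqB]
    refine measure_inter_conull' (measure_mono_null ?_ (ae_iff.1 h))
    rintro x ⟨-, hx⟩ rfl
    exact hx hqB
  · rw [Set.indicator_of_notMem hqB]
    refine measure_mono_null ?_ (ae_iff.1 h)
    rintro x ⟨-, hx⟩ rfl
    exact hqB hx

section Families

variable {S Q R : Type*} [MeasurableSpace S] [MeasurableSpace Q] [MeasurableSpace R]
  {m : Measure Q} {κ η : Q → Measure S}

theorem measurable_withDensity_family (hκ : Measurable κ) {f : S → ℝ≥0∞} (hf : Measurable f) :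
    Measurable fun q ↦ (κ q).withDensity f := by
  refine Measure.measurable_of_measurable_coe _ fun A hA ↦ ?_
  simp only [withDensity_apply _ hA, ← lintegral_indicator hA]
  exact (Measure.measurable_lintegral (hf.indicator hA)).comp hκ

theorem bind_map_family (hκ : Measurable κ) {g : S → R} (hg : Measurable g) :
    (m.bind fun q ↦ (κ q).map g) = (m.bind κ).map g := by
  rw [Measure.bind, Measure.bind, ← Measure.join_map_map hg,
    Measure.map_map (Measure.measurable_map g hg) hκ, Function.comp_def]

theorem bind_withDensity_family (hκ : Measurable κ) {f : S → ℝ≥0∞} (hf : Measurable f) :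
    (m.bind fun q ↦ (κ q).withDensity f) = (m.bind κ).withDensity f := by
  ext A hA
  rw [Measure.bind_apply hA (measurable_withDensity_family hκ hf).aemeasurable,
    withDensity_apply _ hA, ← lintegral_indicator hA,
    Measure.lintegral_bind hκ.aemeasurable (hf.indicator hA).aemeasurable]
  simp only [withDensity_apply _ hA, lintegral_indicator hA]

theorem ae_eq_of_forall_measurableSet_ae_eq [MeasurableSpace.CountablyGenerated S]
    (hκ_fin : ∀ᵐ q ∂m, IsFiniteMeasure (κ q))
    (h : ∀ A, MeasurableSet A → ∀ᵐ q ∂m, κ q A = η q A) : κ =ᵐ[m] η := by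
  obtain ⟨C, hC_count, hC_pi, hC_gen⟩ := exists_countable_isPiSystem_generateFrom S
  have h_on_C : ∀ᵐ q ∂m, ∀ A ∈ C, κ q A = η q A := (ae_ball_iff hC_count).2 fun A hA ↦
    h A (hC_gen ▸ MeasurableSpace.measurableSet_generateFrom hA)
  filter_upwards [hκ_fin, h_on_C, h Set.univ .univ] with q _ hq h_univ
  exact ext_of_generate_finite C hC_gen hC_pi hq h_univ

end Families

section Disintegration

variable {S Q : Type*} [MeasurableSpace S] [MeasurableSpace Q]

/-- `κ` is a disintegration of `ρ` along `π` with base measure `m`. Concentration of `κ q` on the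
fiber over `q` is not required literally but is encoded by `bind_restrict` over all measurable `B`,
an identity that passes to pushforwards and densities. The base `m` need not be `ρ.map π`, so a
density can be applied to `ρ` and `κ` while `m` stays fixed. -/
structure IsDisintegration (ρ : Measure S) (π : S → Q) (m : Measure Q) (κ : Q → Measure S) :
    Prop where
  measurable_proj : Measurable π
  measurable_family : Measurable κ
  bind_restrict : ∀ B, MeasurableSet B → (m.restrict B).bind κ = ρ.restrict (π ⁻¹' B)

namespace IsDisintegration

variable {ρ : Measure S} {π : S → Q} {m : Measure Q} {κ η : Q → Measure S}

theorem of_ae_fiber (hπ : Measurable π) (hκ : Measurable κ)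
    (h_fiber : ∀ᵐ q ∂m, κ q (π ⁻¹' {q})ᶜ = 0)
    (h_lintegral : ∀ A, MeasurableSet A → ρ A = ∫⁻ q, κ q A ∂m) :
    IsDisintegration ρ π m κ where
  measurable_proj := hπ
  measurable_family := hκ
  bind_restrict B hB := by
    ext A hA
    calc (m.restrict B).bind κ A
        = ∫⁻ q, B.indicator (fun q ↦ κ q A) q ∂m := by
          rw [Measure.bind_apply hA hκ.aemeasurable, lintegral_indicator hB]
      _ = ∫⁻ q, κ q (A ∩ π ⁻¹' B) ∂m := by
          refine lintegral_congr_ae (h_fiber.mono fun q hq ↦ ?_)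
          exact (measure_inter_preimage_of_ae_eq (ae_iff.2 hq) A B).symm
      _ = ρ.restrict (π ⁻¹' B) A := by
          rw [Measure.restrict_apply hA, h_lintegral _ (hA.inter (hπ hB))]

theorem setLIntegral_measure (h : IsDisintegration ρ π m κ) {A : Set S} (hA : MeasurableSet A)
    {B : Set Q} (hB : MeasurableSet B) : ∫⁻ q in B, κ q A ∂m = ρ (A ∩ π ⁻¹' B) := by
  rw [← Measure.restrict_apply hA, ← h.bind_restrict B hB,
    Measure.bind_apply hA h.measurable_family.aemeasurable]

theorem map (h : IsDisintegration ρ π m κ) {g : S → S} (hg : Measurable g) (hπg : π ∘ g = π) :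
    IsDisintegration (ρ.map g) π m fun q ↦ (κ q).map g where
  measurable_proj := h.measurable_proj
  measurable_family := (Measure.measurable_map g hg).comp h.measurable_family
  bind_restrict B hB := by
    rw [bind_map_family h.measurable_family hg, h.bind_restrict B hB,
      Measure.restrict_map hg (h.measurable_proj hB), ← Set.preimage_comp, hπg]

theorem withDensity (h : IsDisintegration ρ π m κ) {f : S → ℝ≥0∞} (hf : Measurable f) :
    IsDisintegration (ρ.withDensity f) π m fun q ↦ (κ q).withDensity f where
  measurable_proj := h.measurable_proj
  measurable_family := measurable_withDensity_family h.measurable_family hf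
  bind_restrict B hB := by
    rw [bind_withDensity_family h.measurable_family hf, h.bind_restrict B hB,
      restrict_withDensity (h.measurable_proj hB)]

theorem ae_eq [MeasurableSpace.CountablyGenerated S] [SigmaFinite m]
    (hκ : IsDisintegration ρ π m κ) (hη : IsDisintegration ρ π m η)
    (hκ_fin : ∀ᵐ q ∂m, IsFiniteMeasure (κ q)) : κ =ᵐ[m] η := by
  refine ae_eq_of_forall_measurableSet_ae_eq hκ_fin fun A hA ↦ ?_
  refine ae_eq_of_forall_setLIntegral_eq_of_sigmaFinite
    ((Measure.measurable_coe hA).comp hκ.measurable_family)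
    ((Measure.measurable_coe hA).comp hη.measurable_family) fun B hB _ ↦ ?_
  exact (hκ.setLIntegral_measure hA hB).trans (hη.setLIntegral_measure hA hB).symm

end IsDisintegration

end Disintegration

section InvFun

variable {α β γ : Type*} [Nonempty α] {T : α → β}

theorem measurable_invFun_of_surjective [MeasurableSpace α] [MeasurableSpace β]
    (hT : MeasurableEmbedding T) (hT_surj : Function.Surjective T) :
    Measurable (Function.invFun T) := fun A hA ↦ by
  rw [← Set.image_eq_preimage_of_inverse (Function.leftInverse_invFun hT.injective)
    (Function.rightInverse_invFun hT_surj)]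
  exact hT.measurableSet_image.2 hA

theorem comp_invFun_eq_of_comp_eq (hT : Function.Surjective T) {p : α → γ} {r : β → γ}
    (h : r ∘ T = p) : p ∘ Function.invFun T = r := by
  rw [← h, Function.comp_assoc, (Function.rightInverse_invFun hT).id, Function.comp_id]

end InvFun

theorem conditional_measures_quasi_invariance_general
    {S Q : Type*} [MeasurableSpace S] [MeasurableSpace.CountablyGenerated S] [MeasurableSpace Q]
    {μ : Measure S} {π : S → Q} {m : Measure Q} [SigmaFinite m] {ν : Q → Measure S}
    (hν : IsDisintegration μ π m ν) (hν_fin : ∀ᵐ q ∂m, IsFiniteMeasure (ν q))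
    {g : S → S} (hg : Measurable g) (hπg : π ∘ g = π)
    {f : S → ℝ≥0∞} (hf : Measurable f) (hμ : μ.map g = μ.withDensity f) :
    ∀ᵐ q ∂m, (ν q).map g = (ν q).withDensity f := by
  have hν_map : IsDisintegration (μ.withDensity f) π m fun q ↦ (ν q).map g :=
    hμ ▸ hν.map hg hπg
  exact hν_map.ae_eq (hν.withDensity hf) (hν_fin.mono fun q _ ↦ inferInstance)

/-- Let `S`, `Q` be standard Borel spaces, `μ` a Borel probability measure
on `S`, `π : S → Q` Borel, and `(ν_q)` a disintegration of `μ` over `π`.  Let `T : S → S`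
be a Borel bijection with `π ∘ T = π` such that `μ∘T` (where `(μ∘T)(A) = μ(T(A))`) is
absolutely continuous with respect to `μ` with density `F`.  Then for `π_*μ`-almost every
`q`, the measure `ν_q∘T` is absolutely continuous with respect to `ν_q` with the same
density `F`. -/
theorem conditional_measures_quasi_invariance
    {S Q : Type*} [Nonempty S] [MeasurableSpace S] [StandardBorelSpace S]
    [MeasurableSpace Q] [StandardBorelSpace Q]
    (μ : Measure S) [IsProbabilityMeasure μ]
    (π : S → Q) (hπ : Measurable π)
    (ν : Q → Measure S) (hν_meas : Measurable ν)
    (hν_prob : ∀ q, IsProbabilityMeasure (ν q))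
    (hν_fiber : ∀ᵐ q ∂(μ.map π), ν q (π ⁻¹' {q})ᶜ = 0)
    (hν_disint : ∀ A : Set S, MeasurableSet A → μ A = ∫⁻ q, ν q A ∂(μ.map π))
    (T : S → S) (hT_meas : Measurable T) (hT_bij : Function.Bijective T)
    (hTπ : π ∘ T = π)
    (F : S → ℝ) (hF_meas : Measurable F) (hF_nonneg : ∀ x, 0 ≤ F x)
    (hRN : μ.map (Function.invFun T) = μ.withDensity (fun x => ENNReal.ofReal (F x))) :
    ∀ᵐ q ∂(μ.map π),
      (ν q).map (Function.invFun T) = (ν q).withDensity (fun x => ENNReal.ofReal (F x)) := by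
  have hT_inv : Measurable (Function.invFun T) :=
    measurable_invFun_of_surjective (hT_meas.measurableEmbedding hT_bij.injective) hT_bij.surjective
  exact conditional_measures_quasi_invariance_general
    (.of_ae_fiber hπ hν_meas hν_fiber hν_disint) (.of_forall fun q ↦ inferInstance)
    hT_inv (comp_invFun_eq_of_comp_eq hT_bij.surjective hTπ) hF_meas.ennreal_ofReal hRN
end

section
/- For real s > −1 and t > 0, let 𝐉_s(t) = Σ_{k=0}^{∞} ((−1)^k / (k! · Γ(k+s+1))) · (t/2)^{2k+s} be the Bessel function of the first kind of order s, and for x, y > 0 with x ≠ y let J_s(x,y) = ( √x · 𝐉_{s+1}(√x) · 𝐉_s(√y) − √y · 𝐉_{s+1}(√y) · 𝐉_s(√x) ) / (2(x−y)) be the Bessel kernel. Then for every s > −1 and all x, y > 0 with x ≠ y: J_s(x,y) = J_{s+2}(x,y) + ((s+1)/√(xy)) · 𝐉_{s+1}(√x) · 𝐉_{s+1}(√y). -/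
open scoped Real

/-- The Bessel function of the first kind of real order `s`, defined for `t > 0`
by its power series `𝐉_s(t) = Σ_k ((−1)^k / (k! Γ(k+s+1))) (t/2)^(2k+s)`
(real powers). -/
noncomputable def besselJ (s t : ℝ) : ℝ :=
  ∑' k : ℕ, ((-1 : ℝ) ^ k / ((Nat.factorial k : ℝ) * Real.Gamma ((k : ℝ) + s + 1))) *
    (t / 2) ^ (2 * (k : ℝ) + s)

/-- The Bessel kernel
`J_s(x,y) = (√x 𝐉_{s+1}(√x) 𝐉_s(√y) − √y 𝐉_{s+1}(√y) 𝐉_s(√x)) / (2(x−y))`. -/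
noncomputable def besselKernel (s x y : ℝ) : ℝ :=
  (Real.sqrt x * besselJ (s + 1) (Real.sqrt x) * besselJ s (Real.sqrt y) -
      Real.sqrt y * besselJ (s + 1) (Real.sqrt y) * besselJ s (Real.sqrt x)) /
    (2 * (x - y))

/-!
Since `1 / Γ` satisfies `1 / Γ(s) = s / Γ(s + 1)` at every real `s`, the `k`-th terms `a_k(s)` of
the Bessel series obey `2 (k + s) a_k(s) = t a_k(s - 1)` and `2 (k + 1) a_{k+1}(s) = -t a_k(s + 1)`.
Summing over `k` and subtracting gives the three-term recurrence
`t (𝐉_{s-1}(t) + 𝐉_{s+1}(t)) = 2 s 𝐉_s(t)`. It eliminates `𝐉_s` from the numerator of `J_s` and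
`𝐉_{s+3}` from that of `J_{s+2}`. Both numerators are then expressed through `𝐉_{s+1}` and
`𝐉_{s+2}`, and they differ by `2 (x - y) (s + 1) / √(xy) · 𝐉_{s+1}(√x) 𝐉_{s+1}(√y)`.
-/

/-- The `k`-th term of the power series defining `besselJ s t`. At a pole of `Γ` the coefficient
vanishes because `Real.Gamma` and division by zero return `0`; this is the value of the entire
function `1 / Γ`, so for `t > 0` the series is the usual Bessel function at every real order. -/
noncomputable def besselTerm (s t : ℝ) (k : ℕ) : ℝ :=
  ((-1 : ℝ) ^ k / ((Nat.factorial k : ℝ) * Real.Gamma ((k : ℝ) + s + 1))) *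
    (t / 2) ^ (2 * (k : ℝ) + s)

theorem inv_Gamma_eq_self_mul_inv_Gamma_add_one (s : ℝ) :
    (Real.Gamma s)⁻¹ = s * (Real.Gamma (s + 1))⁻¹ := by
  rcases eq_or_ne s 0 with rfl | hs
  · rw [Real.Gamma_zero, inv_zero, zero_mul]
  · rw [Real.Gamma_add_one hs, mul_inv, mul_inv_cancel_left₀ hs]

section Series

variable {t : ℝ}

theorem two_mul_add_mul_besselTerm (ht : t ≠ 0) (s : ℝ) (k : ℕ) :
    2 * (k + s) * besselTerm s t k = t * besselTerm (s - 1) t k := by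
  have hGamma : (Real.Gamma (k + (s - 1) + 1))⁻¹ = (k + s) * (Real.Gamma (k + s + 1))⁻¹ := by
    rw [show k + (s - 1) + 1 = k + s by ring, inv_Gamma_eq_self_mul_inv_Gamma_add_one]
  have hpow : (t / 2) ^ (2 * k + s) = (t / 2) ^ (2 * k + (s - 1)) * (t / 2) := by
    rw [← Real.rpow_add_one (div_ne_zero ht two_ne_zero)]
    ring_nf
  simp only [besselTerm, div_eq_mul_inv _ (_ * _), mul_inv, hGamma, hpow]
  ring

theorem two_mul_succ_mul_besselTerm_succ (ht : t ≠ 0) (s : ℝ) (k : ℕ) :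
    2 * (k + 1) * besselTerm s t (k + 1) = -t * besselTerm (s + 1) t k := by
  have hGamma : ((k + 1 : ℕ) : ℝ) + s + 1 = k + (s + 1) + 1 := by
    push_cast
    ring
  have hpow : (t / 2) ^ (2 * ((k + 1 : ℕ) : ℝ) + s) = (t / 2) ^ (2 * k + (s + 1)) * (t / 2) := by
    rw [← Real.rpow_add_one (div_ne_zero ht two_ne_zero)]
    push_cast
    ring_nf
  rw [besselTerm, besselTerm, hGamma, hpow, Nat.factorial_succ, pow_succ]
  push_cast
  field_simp

theorem four_mul_succ_mul_add_mul_besselTerm_succ (ht : t ≠ 0) (s : ℝ) (k : ℕ) :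
    4 * (k + 1) * (k + s + 1) * besselTerm s t (k + 1) = -t ^ 2 * besselTerm s t k := by
  have hindex := two_mul_succ_mul_besselTerm_succ ht s k
  have horder := two_mul_add_mul_besselTerm ht (s + 1) k
  rw [add_sub_cancel_right] at horder
  linear_combination 2 * (k + s + 1) * hindex - t * horder

theorem summable_besselTerm (ht : t ≠ 0) (s : ℝ) : Summable (besselTerm s t) := by
  refine summable_of_ratio_norm_eventually_le (r := 1 / 2) (by norm_num) ?_
  have hcast := tendsto_natCast_atTop_atTop (R := ℝ)
  filter_upwards [hcast.eventually_ge_atTop (t ^ 2), hcast.eventually_ge_atTop (-s)]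
    with k hkt hks
  have hratio : t ^ 2 * 2 ≤ 4 * (k + 1) * (k + s + 1) := by nlinarith [sq_nonneg t]
  have hscaled : t ^ 2 * (2 * ‖besselTerm s t (k + 1)‖) ≤ t ^ 2 * ‖besselTerm s t k‖ :=
    calc t ^ 2 * (2 * ‖besselTerm s t (k + 1)‖)
      _ = t ^ 2 * 2 * ‖besselTerm s t (k + 1)‖ := (mul_assoc _ _ _).symm
      _ ≤ ‖4 * (k + 1) * (k + s + 1)‖ * ‖besselTerm s t (k + 1)‖ := by
        gcongr
        exact hratio.trans (Real.le_norm_self _)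
      _ = ‖-t ^ 2 * besselTerm s t k‖ := by
        rw [← norm_mul, four_mul_succ_mul_add_mul_besselTerm_succ ht]
      _ = t ^ 2 * ‖besselTerm s t k‖ := by
        rw [norm_mul, norm_neg, Real.norm_of_nonneg (sq_nonneg t)]
  linarith [le_of_mul_le_mul_left hscaled (by positivity)]

theorem hasSum_besselTerm (ht : t ≠ 0) (s : ℝ) :
    HasSum (besselTerm s t) (besselJ s t) :=
  (summable_besselTerm ht s).hasSum

theorem hasSum_two_mul_add_mul_besselTerm (ht : t ≠ 0) (s : ℝ) :
    HasSum (fun k : ℕ ↦ 2 * (k + s) * besselTerm s t k) (t * besselJ (s - 1) t) := by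
  simp only [two_mul_add_mul_besselTerm ht]
  exact (hasSum_besselTerm ht _).mul_left t

theorem hasSum_two_mul_natCast_mul_besselTerm (ht : t ≠ 0) (s : ℝ) :
    HasSum (fun k : ℕ ↦ 2 * k * besselTerm s t k) (-t * besselJ (s + 1) t) := by
  rw [← hasSum_nat_add_iff' 1]
  simpa [two_mul_succ_mul_besselTerm_succ ht] using (hasSum_besselTerm ht (s + 1)).mul_left (-t)

theorem mul_besselJ_sub_one_add_besselJ_add_one (ht : t ≠ 0) (s : ℝ) :
    t * (besselJ (s - 1) t + besselJ (s + 1) t) = 2 * s * besselJ s t := by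
  have hdiff := (hasSum_two_mul_add_mul_besselTerm ht s).sub
    (hasSum_two_mul_natCast_mul_besselTerm ht s)
  have hterm (k : ℕ) : 2 * (k + s) * besselTerm s t k - 2 * k * besselTerm s t k =
      2 * s * besselTerm s t k := by ring
  simp only [hterm] at hdiff
  linear_combination hdiff.unique ((hasSum_besselTerm ht s).mul_left (2 * s))

theorem besselJ_eq_div_mul_sub (ht : t ≠ 0) (s : ℝ) :
    besselJ s t = 2 * (s + 1) / t * besselJ (s + 1) t - besselJ (s + 2) t := by
  have hrec := mul_besselJ_sub_one_add_besselJ_add_one ht (s + 1)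
  rw [add_sub_cancel_right, add_assoc, one_add_one_eq_two] at hrec
  field_simp
  linear_combination hrec

end Series

section Kernel

variable {x y : ℝ}

theorem besselKernel_eq_besselJ_sub_one (hx : 0 < x) (hy : 0 < y) (s : ℝ) :
    besselKernel s x y =
      (√y * besselJ (s - 1) √y * besselJ s √x - √x * besselJ (s - 1) √x * besselJ s √y) /
        (2 * (x - y)) := by
  have hrecx := mul_besselJ_sub_one_add_besselJ_add_one (Real.sqrt_ne_zero'.mpr hx) s
  have hrecy := mul_besselJ_sub_one_add_besselJ_add_one (Real.sqrt_ne_zero'.mpr hy) s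
  rw [besselKernel]
  congr 1
  linear_combination besselJ s √y * hrecx - besselJ s √x * hrecy

theorem besselKernel_numerator_eq (hx : 0 < x) (hy : 0 < y) (s : ℝ) :
    √x * besselJ (s + 1) √x * besselJ s √y - √y * besselJ (s + 1) √y * besselJ s √x =
      √y * besselJ (s + 1) √y * besselJ (s + 2) √x -
        √x * besselJ (s + 1) √x * besselJ (s + 2) √y +
        2 * (x - y) * ((s + 1) / √(x * y) * besselJ (s + 1) √x * besselJ (s + 1) √y) := by
  have hsx : √x ≠ 0 := Real.sqrt_ne_zero'.mpr hx
  have hsy : √y ≠ 0 := Real.sqrt_ne_zero'.mpr hy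
  have hdiff : x - y = √x ^ 2 - √y ^ 2 := by rw [Real.sq_sqrt hx.le, Real.sq_sqrt hy.le]
  rw [besselJ_eq_div_mul_sub hsx s, besselJ_eq_div_mul_sub hsy s, Real.sqrt_mul hx.le, hdiff]
  field_simp
  ring

theorem besselKernel_recurrence_general (hx : 0 < x) (hy : 0 < y) (hxy : x ≠ y) (s : ℝ) :
    besselKernel s x y =
      besselKernel (s + 2) x y +
        (s + 1) / √(x * y) * besselJ (s + 1) √x * besselJ (s + 1) √y := by
  have hdenom : 2 * (x - y) ≠ 0 := mul_ne_zero two_ne_zero (sub_ne_zero.mpr hxy)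
  rw [besselKernel_eq_besselJ_sub_one hx hy (s + 2), show s + 2 - 1 = s + 1 by ring,
    besselKernel, besselKernel_numerator_eq hx hy, add_div, mul_div_cancel_left₀ _ hdenom]

end Kernel

/-- For every `s > −1` and all `x, y > 0` with `x ≠ y`:
`J_s(x,y) = J_{s+2}(x,y) + ((s+1)/√(xy)) 𝐉_{s+1}(√x) 𝐉_{s+1}(√y)`. -/
theorem besselKernel_recurrence (s : ℝ) (hs : -1 < s)
    (x y : ℝ) (hx : 0 < x) (hy : 0 < y) (hxy : x ≠ y) :
    besselKernel s x y =
      besselKernel (s + 2) x y +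
        ((s + 1) / Real.sqrt (x * y)) * besselJ (s + 1) (Real.sqrt x) *
          besselJ (s + 1) (Real.sqrt y) := by
  exact besselKernel_recurrence_general hx hy hxy s
end

section
/- Let I ⊂ ℝ^d be a bounded open set and let η be a Borel measure on ℝ^d concentrated on I and finite on compact subsets of I. Suppose that η(T(A)) = η(A) for every Borel set A ⊆ ℝ^d and every elementary cube exchange T with balls contained in I. Then there exists a constant c ≥ 0 such that η is c times the restriction of Lebesgue measure to I. -/
open MeasureTheory Metric

/-!
Exchanging two disjoint balls of equal radius inside `I` shows that `η` gives them equal mass, so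
the small balls around any two points of `I` eventually have the same `η`-mass, and of course the
same Lebesgue measure. By the Besicovitch differentiation theorem the density of `η` with respect
to Lebesgue measure exists and is finite at almost every point of `I`; being the same at all points
of `I`, it is a constant `c`. An everywhere finite density rules out a singular part, hence `η` is
`c` times Lebesgue measure on `I`.
-/

open Filter Set Topology
open scoped ENNReal NNReal Pointwise

section TranslationSwap

variable {G X : Type*} [AddGroup G] [AddAction G X] {s : Set X} {v : G} {x : X}

open Classical in
/-- The map exchanging `s` with its translate `v +ᵥ s` by translations and fixing all other points.
It is meaningful when `s` and `v +ᵥ s` are disjoint; on their intersection, `s` takes precedence. -/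
noncomputable def translationSwap (s : Set X) (v : G) (x : X) : X :=
  if x ∈ s then v +ᵥ x else if x ∈ v +ᵥ s then -v +ᵥ x else x

theorem translationSwap_of_mem (hx : x ∈ s) : translationSwap s v x = v +ᵥ x :=
  if_pos hx

theorem translationSwap_of_mem_vadd (hs : Disjoint s (v +ᵥ s)) (hx : x ∈ v +ᵥ s) :
    translationSwap s v x = -v +ᵥ x := by
  rw [translationSwap, if_neg (disjoint_right.1 hs hx), if_pos hx]

theorem translationSwap_of_notMem (hx : x ∉ s) (hx' : x ∉ v +ᵥ s) :
    translationSwap s v x = x := by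
  rw [translationSwap, if_neg hx, if_neg hx']

theorem involutive_translationSwap (hs : Disjoint s (v +ᵥ s)) :
    Function.Involutive (translationSwap s v) := by
  intro x
  by_cases hx : x ∈ s
  · rw [translationSwap_of_mem hx,
      translationSwap_of_mem_vadd hs (vadd_mem_vadd_set hx), neg_vadd_vadd]
  by_cases hx' : x ∈ v +ᵥ s
  · rw [translationSwap_of_mem_vadd hs hx',
      translationSwap_of_mem (mem_vadd_set_iff_neg_vadd_mem.1 hx'), vadd_neg_vadd]
  · rw [translationSwap_of_notMem hx hx', translationSwap_of_notMem hx hx']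

theorem image_translationSwap : translationSwap s v '' s = v +ᵥ s :=
  image_congr fun _ hx => translationSwap_of_mem hx

end TranslationSwap

theorem sub_vadd_closedBall {E : Type*} [SeminormedAddCommGroup E] (a b : E) (r : ℝ) :
    (b - a) +ᵥ closedBall a r = closedBall b r := by
  rw [vadd_closedBall, vadd_eq_add, sub_add_cancel]

section CubeExchange

variable {d : ℕ} {I : Set (Fin d → ℝ)} {a b : Fin d → ℝ} {r : ℝ}

/-- The exchange of a single pair of disjoint cubes `B(a,r)`, `B(b,r)` in `I`. -/
def CubeExchangeData.single (hr : 0 < r) (ha : closedBall a r ⊆ I) (hb : closedBall b r ⊆ I)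
    (hab : Disjoint (closedBall a r) (closedBall b r)) : CubeExchangeData d I where
  k := 1
  a _ := a
  a' _ := b
  r _ := r
  r_pos _ := hr
  disjoint := by
    rintro (i | i) (j | j) hij
    · exact absurd (congrArg Sum.inl (Subsingleton.elim i j)) hij
    · exact hab
    · exact hab.symm
    · exact absurd (congrArg Sum.inr (Subsingleton.elim i j)) hij
  subset _ := ⟨ha, hb⟩

theorem CubeExchangeData.realizes_single (hr : 0 < r) (ha : closedBall a r ⊆ I)
    (hb : closedBall b r ⊆ I) (hab : Disjoint (closedBall a r) (closedBall b r)) :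
    (single hr ha hb hab).Realizes (translationSwap (closedBall a r) (b - a)) := by
  have vadd_ball := sub_vadd_closedBall a b r
  refine ⟨fun _ x (hx : x ∈ closedBall a r) => ?_, fun _ x (hx : x ∈ closedBall b r) => ?_,
    fun x hx => ?_⟩
  · exact (translationSwap_of_mem hx).trans (add_comm _ _)
  · have swap_eq : translationSwap (closedBall a r) (b - a) x = -(b - a) +ᵥ x :=
      translationSwap_of_mem_vadd (vadd_ball.symm ▸ hab) (vadd_ball.symm ▸ hx)
    rw [swap_eq, neg_sub, vadd_eq_add, add_comm]
    rfl
  · obtain ⟨hxa, hxb⟩ := hx (0 : Fin 1)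
    exact translationSwap_of_notMem hxa (vadd_ball.symm ▸ hxb)

theorem measure_closedBall_eq_of_cubeExchange_invariant {η : Measure (Fin d → ℝ)}
    (hη : ∀ T : Equiv.Perm (Fin d → ℝ), (∃ D : CubeExchangeData d I, D.Realizes T) →
      ∀ A : Set (Fin d → ℝ), MeasurableSet A → η (T '' A) = η A)
    (hr : 0 < r) (ha : closedBall a r ⊆ I) (hb : closedBall b r ⊆ I)
    (hab : Disjoint (closedBall a r) (closedBall b r)) :
    η (closedBall a r) = η (closedBall b r) := by
  have involutive : Function.Involutive (translationSwap (closedBall a r) (b - a)) :=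
    involutive_translationSwap ((sub_vadd_closedBall a b r).symm ▸ hab)
  calc η (closedBall a r)
      = η (translationSwap (closedBall a r) (b - a) '' closedBall a r) :=
        (hη involutive.toPerm ⟨_, CubeExchangeData.realizes_single hr ha hb hab⟩ _
          measurableSet_closedBall).symm
    _ = η (closedBall b r) := by rw [image_translationSwap, sub_vadd_closedBall]

end CubeExchange

theorem restrict_eq_restrict_of_forall_exists_mem_nhdsWithin {X : Type*} [TopologicalSpace X]
    [SecondCountableTopology X] [MeasurableSpace X] {μ ν : Measure X} {s : Set X}
    (h : ∀ x ∈ s, ∃ t ∈ 𝓝[s] x, μ.restrict t = ν.restrict t) : μ.restrict s = ν.restrict s := by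
  choose! t ht hμν using h
  obtain ⟨u, hus, hu, hsu⟩ := TopologicalSpace.countable_cover_nhdsWithin ht
  exact Measure.restrict_congr_mono hsu
    ((Measure.restrict_biUnion_congr hu).2 fun x hx => hμν x (hus hx))

/-- The density of `ρ` with respect to `μ` at `x`, as a limit over shrinking closed balls centred
at `x`, exists and equals `c`. Balls that are null for both measures count as ratio `0 / 0 = 0`. -/
def HasBallDensityAt {X : Type*} [PseudoMetricSpace X] [MeasurableSpace X] (ρ μ : Measure X)
    (c : ℝ≥0∞) (x : X) : Prop :=
  Tendsto (fun r => ρ (closedBall x r) / μ (closedBall x r)) (𝓝[>] 0) (𝓝 c)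

section Density

theorem hasBallDensityAt_restrict_iff {X : Type*} [PseudoMetricSpace X] [MeasurableSpace X]
    {ρ μ : Measure X} {c : ℝ≥0∞} {x : X} {s : Set X} (hs : s ∈ 𝓝 x) :
    HasBallDensityAt (ρ.restrict s) μ c x ↔ HasBallDensityAt ρ μ c x := by
  refine tendsto_congr' ?_
  filter_upwards [(eventually_closedBall_subset hs).filter_mono nhdsWithin_le_nhds] with r hr
  rw [Measure.restrict_eq_self _ hr]

variable {X : Type*} [MetricSpace X] [SecondCountableTopology X] [MeasurableSpace X] [BorelSpace X]
  [HasBesicovitchCovering X] {ρ μ : Measure X} {c : ℝ≥0} {x : X} {s U : Set X}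

theorem exists_hasBallDensityAt_of_mem_nhds [IsLocallyFiniteMeasure μ] [μ.IsOpenPosMeasure]
    (hρ : ρ.FiniteAtFilter (𝓝 x)) (hU : U ∈ 𝓝 x) :
    ∃ y ∈ U, ∃ c : ℝ≥0, HasBallDensityAt ρ μ c y := by
  obtain ⟨V, ⟨⟨hxV, hV⟩, hVU⟩, hρV⟩ :=
    hρ.exists_mem_basis ((nhds_basis_opens x).restrict_subset hU)
  have : IsFiniteMeasure (ρ.restrict V) := isFiniteMeasure_restrict.2 hρV.ne
  have ae_density := (Besicovitch.ae_tendsto_rnDeriv (ρ.restrict V) μ).and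
    (Measure.rnDeriv_lt_top (ρ.restrict V) μ)
  obtain ⟨y, hyV, hy, hy_lt⟩ := ((frequently_ae_mem_iff.2
    (hV.measure_pos μ ⟨x, hxV⟩).ne').and_eventually ae_density).exists
  lift (ρ.restrict V).rnDeriv μ y to ℝ≥0 using hy_lt.ne with c
  exact ⟨y, hVU hyV, c, (hasBallDensityAt_restrict_iff (hV.mem_nhds hyV)).1 hy⟩

theorem restrict_absolutelyContinuous_of_hasBallDensityAt [IsLocallyFiniteMeasure ρ]
    [IsLocallyFiniteMeasure μ] (h : ∀ x ∈ s, HasBallDensityAt ρ μ c x) : ρ.restrict s ≪ μ := by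
  have eventually_le (x) (hx : x ∈ s) : ∀ᶠ r in 𝓝[>] 0,
      ρ (closedBall x r) ≤ ((c + 1) • μ) (closedBall x r) := by
    have c_lt : (c : ℝ≥0∞) < (c + 1 : ℝ≥0) := mod_cast lt_add_one c
    filter_upwards [(h x hx).eventually_lt_const c_lt] with r hr
    exact (ENNReal.div_le_iff_le_mul (.inr ENNReal.coe_ne_top) (.inr (pos_of_gt c_lt).ne')).1 hr.le
  refine .mk fun t ht hμt => ?_
  have le : ρ (t ∩ s) ≤ ((c + 1) • μ) (t ∩ s) :=
    (Besicovitch.vitaliFamily ρ).measure_le_of_frequently_le _ .rfl _ fun x hx =>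
      (Besicovitch.tendsto_filterAt ρ x).frequently (eventually_le x hx.2).frequently
  rw [Measure.restrict_apply ht]
  exact le_antisymm (le.trans_eq (Measure.smul_absolutelyContinuous
    (measure_mono_null inter_subset_left hμt))) zero_le

theorem restrict_eq_smul_restrict_of_hasBallDensityAt [IsLocallyFiniteMeasure ρ]
    [IsLocallyFiniteMeasure μ] (hs : MeasurableSet s) (h : ∀ x ∈ s, HasBallDensityAt ρ μ c x) :
    ρ.restrict s = (c : ℝ≥0∞) • μ.restrict s := by
  have rnDeriv_eq : ρ.rnDeriv μ =ᵐ[μ.restrict s] fun _ => (c : ℝ≥0∞) := by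
    rw [EventuallyEq, ae_restrict_iff' hs]
    filter_upwards [Besicovitch.ae_tendsto_rnDeriv ρ μ] with x hx hxs
    exact tendsto_nhds_unique hx (h x hxs)
  calc ρ.restrict s
      = μ.withDensity ((ρ.restrict s).rnDeriv μ) := (Measure.withDensity_rnDeriv_eq _ _
        (restrict_absolutelyContinuous_of_hasBallDensityAt h)).symm
    _ = (μ.restrict s).withDensity (ρ.rnDeriv μ) := by
        rw [withDensity_congr_ae (Measure.rnDeriv_restrict ρ μ hs), withDensity_indicator hs]
    _ = (c : ℝ≥0∞) • μ.restrict s := by rw [withDensity_congr_ae rnDeriv_eq, withDensity_const]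

theorem restrict_eq_smul_restrict_of_isOpen_of_hasBallDensityAt [IsLocallyFiniteMeasure μ]
    (hU : IsOpen U) (hρ : ∀ x ∈ U, ρ.FiniteAtFilter (𝓝 x))
    (h : ∀ x ∈ U, HasBallDensityAt ρ μ c x) : ρ.restrict U = (c : ℝ≥0∞) • μ.restrict U := by
  rw [← Measure.restrict_smul]
  refine restrict_eq_restrict_of_forall_exists_mem_nhdsWithin fun x hx => ?_
  obtain ⟨V, ⟨⟨hxV, hV⟩, hVU⟩, hρV⟩ :=
    (hρ x hx).exists_mem_basis ((nhds_basis_opens x).restrict_subset (hU.mem_nhds hx))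
  have : IsFiniteMeasure (ρ.restrict V) := isFiniteMeasure_restrict.2 hρV.ne
  refine ⟨V, mem_nhdsWithin_of_mem_nhds (hV.mem_nhds hxV), ?_⟩
  rw [Measure.restrict_smul, ← restrict_eq_smul_restrict_of_hasBallDensityAt hV.measurableSet
    fun y hy => (hasBallDensityAt_restrict_iff (hV.mem_nhds hy)).2 (h y (hVU hy)),
    Measure.restrict_restrict hV.measurableSet, inter_self]

theorem exists_restrict_eq_smul_restrict_of_eventually_measure_closedBall_eq
    [IsLocallyFiniteMeasure μ] [μ.IsOpenPosMeasure] (hU : IsOpen U)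
    (hρ : ∀ x ∈ U, ρ.FiniteAtFilter (𝓝 x))
    (hρ_eq : ∀ x ∈ U, ∀ y ∈ U, ∀ᶠ r in 𝓝[>] 0, ρ (closedBall x r) = ρ (closedBall y r))
    (hμ_eq : ∀ x ∈ U, ∀ y ∈ U, ∀ᶠ r in 𝓝[>] 0, μ (closedBall x r) = μ (closedBall y r)) :
    ∃ c : ℝ≥0, ρ.restrict U = (c : ℝ≥0∞) • μ.restrict U := by
  obtain rfl | ⟨x₀, hx₀⟩ := U.eq_empty_or_nonempty
  · exact ⟨0, by simp⟩
  obtain ⟨y, hy, c, density_y⟩ :=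
    exists_hasBallDensityAt_of_mem_nhds (μ := μ) (hρ x₀ hx₀) (hU.mem_nhds hx₀)
  refine ⟨c, restrict_eq_smul_restrict_of_isOpen_of_hasBallDensityAt hU hρ fun x hx => ?_⟩
  refine density_y.congr' ?_
  filter_upwards [hρ_eq y hy x hx, hμ_eq y hy x hx] with r hρr hμr
  rw [hρr, hμr]

end Density

theorem eventually_measure_closedBall_eq_of_disjoint {X : Type*} [MetricSpace X]
    [MeasurableSpace X] {ρ : Measure X} {U : Set X} (hU : IsOpen U)
    (h : ∀ ⦃a b : X⦄ ⦃r : ℝ⦄, 0 < r → closedBall a r ⊆ U → closedBall b r ⊆ U →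
      Disjoint (closedBall a r) (closedBall b r) → ρ (closedBall a r) = ρ (closedBall b r))
    {x y : X} (hx : x ∈ U) (hy : y ∈ U) :
    ∀ᶠ r in 𝓝[>] 0, ρ (closedBall x r) = ρ (closedBall y r) := by
  obtain rfl | hxy := eq_or_ne x y
  · exact .of_forall fun _ => rfl
  have eventually_subset {z : X} (hz : z ∈ U) : ∀ᶠ r in 𝓝[>] 0, closedBall z r ⊆ U :=
    (eventually_closedBall_subset (hU.mem_nhds hz)).filter_mono nhdsWithin_le_nhds
  filter_upwards [eventually_subset hx, eventually_subset hy,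
    Ioo_mem_nhdsGT (half_pos (dist_pos.2 hxy))] with r hrx hry hr
  exact h hr.1 hrx hry (closedBall_disjoint_closedBall (by linarith [hr.2]))

theorem finiteAtFilter_nhds_of_forall_isCompact {X : Type*} [TopologicalSpace X]
    [LocallyCompactSpace X] [MeasurableSpace X] {ρ : Measure X} {U : Set X} (hU : IsOpen U)
    (hρ : ∀ K ⊆ U, IsCompact K → ρ K < ⊤) {x : X} (hx : x ∈ U) : ρ.FiniteAtFilter (𝓝 x) := by
  obtain ⟨K, hKx, hKU, hK⟩ := local_compact_nhds (hU.mem_nhds hx)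
  exact ⟨K, hKx, hρ K hKU hK⟩

theorem invariant_measure_is_lebesgue_general {E : Type*} [NormedAddCommGroup E] [NormedSpace ℝ E]
    [FiniteDimensional ℝ E] [MeasurableSpace E] [BorelSpace E] (μ : Measure E) [μ.IsAddHaarMeasure]
    {I : Set E} (hI : IsOpen I) {η : Measure E} (hη_conc : η Iᶜ = 0)
    (hη_loc : ∀ K ⊆ I, IsCompact K → η K < ⊤)
    (hη_ball : ∀ ⦃a b : E⦄ ⦃r : ℝ⦄, 0 < r → closedBall a r ⊆ I → closedBall b r ⊆ I →
      Disjoint (closedBall a r) (closedBall b r) → η (closedBall a r) = η (closedBall b r)) :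
    ∃ c : ℝ≥0, η = (c : ℝ≥0∞) • μ.restrict I := by
  have : ProperSpace E := FiniteDimensional.proper ℝ E
  have η_restrict : η.restrict I = η :=
    Measure.restrict_eq_self_of_ae_mem (mem_ae_iff.2 hη_conc)
  obtain ⟨c, hc⟩ := exists_restrict_eq_smul_restrict_of_eventually_measure_closedBall_eq
    (μ := μ) hI (fun x hx => finiteAtFilter_nhds_of_forall_isCompact hI hη_loc hx)
    (fun x hx y hy => eventually_measure_closedBall_eq_of_disjoint hI hη_ball hx hy)
    (fun x _ y _ => .of_forall fun r => by
      rw [Measure.addHaar_closedBall_center μ x, Measure.addHaar_closedBall_center μ y])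
  exact ⟨c, η_restrict ▸ hc⟩

/-- Let `I ⊂ ℝ^d` be bounded open and `η` a Borel measure concentrated
on `I`, finite on compact subsets of `I`, and invariant under every elementary cube
exchange with balls contained in `I`.  Then `η` is a nonnegative constant multiple of the
restriction of Lebesgue measure to `I`. -/
theorem invariant_measure_is_lebesgue
    (d : ℕ) (I : Set (Fin d → ℝ)) (hI_open : IsOpen I) (hI_bdd : Bornology.IsBounded I)
    (η : Measure (Fin d → ℝ))
    (hη_conc : η Iᶜ = 0)
    (hη_loc : ∀ K : Set (Fin d → ℝ), K ⊆ I → IsCompact K → η K < ⊤)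
    (hη_inv : ∀ (T : Equiv.Perm (Fin d → ℝ)), (∃ D : CubeExchangeData d I, D.Realizes ⇑T) →
      ∀ A : Set (Fin d → ℝ), MeasurableSet A → η (⇑T '' A) = η A) :
    ∃ c : NNReal, η = (c : ENNReal) • volume.restrict I := by
  exact invariant_measure_is_lebesgue_general volume hI_open hη_conc hη_loc
    fun _ _ _ => measure_closedBall_eq_of_cubeExchange_invariant hη_inv
end

section
/- For real s > −1 and t > 0, let 𝐉_s(t) = Σ_{k=0}^{∞} ((−1)^k / (k! · Γ(k+s+1))) · (t/2)^{2k+s} be the Bessel function of the first kind of order s. Define the diagonal of the Bessel kernel by d_s(x) = (1/2) · ( A′(x)·B(x) − A(x)·B′(x) ) for x > 0, where A(x) = √x · 𝐉_{s+1}(√x) and B(x) = 𝐉_s(√x); equivalently, d_s(x) = lim_{y→x} ( A(x)B(y) − A(y)B(x) ) / (2(x−y)). Then for every s > −1: ∫_0^∞ |d_s(x)| / (1+x) dx < +∞. -/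
open MeasureTheory

/-- `A(x) = √x · 𝐉_{s+1}(√x)`. -/
noncomputable def besselA (s x : ℝ) : ℝ := Real.sqrt x * besselJ (s + 1) (Real.sqrt x)

/-- `B(x) = 𝐉_s(√x)`. -/
noncomputable def besselB (s x : ℝ) : ℝ := besselJ s (Real.sqrt x)

/-- The diagonal of the Bessel kernel: `d_s(x) = (1/2)(A′(x)B(x) − A(x)B′(x))`. -/
noncomputable def besselDiag (s x : ℝ) : ℝ :=
  (1 / 2) * (deriv (besselA s) x * besselB s x - besselA s x * deriv (besselB s) x)

/-!
Everything rests on the identity `d_s(x) = (𝐉_s(√x)² - 𝐉_{s-1}(√x) 𝐉_{s+1}(√x)) / 4`, which follows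
from the differential recurrences of `𝐉_s`. Near `0`, `𝐉_ν(t) = O(t^ν)` because
`𝐉_ν(t) = (t/2)^ν C_ν(-t²/4)` with `C_ν` entire, so `d_s(x) = O(x^s)`. Near infinity,
`u(t) = √t 𝐉_ν(t)` solves `u″ = ((ν² - 1/4)/t² - 1) u`, a harmonic oscillator with an integrable
perturbation; by Grönwall its energy `u² + u′²` stays bounded, so `𝐉_ν(t) = O(t^(-1/2))` and
`d_s(x) = O(x^(-1/2))`.
-/

open Asymptotics Filter Set Topology

section EntirePowerSeries

variable {𝕜 : Type*} [RCLike 𝕜] {a : ℕ → 𝕜}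

lemma summable_norm_mul_natCast_mul_pow_pred (ha : ∀ z, Summable fun k => a k * z ^ k)
    {r : ℝ} (hr : 1 ≤ r) : Summable fun k : ℕ => ‖a k‖ * (k * r ^ (k - 1)) := by
  refine (ha ((2 * r : ℝ) : 𝕜)).norm.of_nonneg_of_le (fun k => by positivity) fun k => ?_
  rw [norm_mul, norm_pow, RCLike.norm_ofReal, abs_of_pos (by positivity : 0 < 2 * r), mul_pow]
  gcongr
  · exact_mod_cast Nat.lt_two_pow_self.le
  · exact Nat.sub_le k 1

lemma hasDerivAt_tsum_mul_pow (ha : ∀ z, Summable fun k => a k * z ^ k) (z : 𝕜) :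
    HasDerivAt (fun w => ∑' k, a k * w ^ k) (∑' k : ℕ, (k + 1) * a (k + 1) * z ^ k) z := by
  have hbound := summable_norm_mul_natCast_mul_pow_pred ha (r := ‖z‖ + 1) (by simp)
  have hderiv_le : ∀ k : ℕ, ∀ w ∈ Metric.ball (0 : 𝕜) (‖z‖ + 1),
      ‖a k * (k * w ^ (k - 1))‖ ≤ ‖a k‖ * (k * (‖z‖ + 1) ^ (k - 1)) := fun k w hw => by
    rw [norm_mul, norm_mul, norm_pow, RCLike.norm_natCast]
    gcongr
    exact (mem_ball_zero_iff.1 hw).le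
  have hz : z ∈ Metric.ball (0 : 𝕜) (‖z‖ + 1) := by simp
  have hderiv : HasDerivAt (fun w => ∑' k, a k * w ^ k) (∑' k : ℕ, a k * (k * z ^ (k - 1))) z :=
    hasDerivAt_tsum_of_isPreconnected hbound Metric.isOpen_ball
      (convex_ball _ _).isPreconnected (fun k w _ => (hasDerivAt_pow k w).const_mul _)
      hderiv_le hz (ha z) hz
  refine hderiv.congr_deriv ?_
  rw [(Summable.of_norm_bounded hbound fun k => hderiv_le k z hz).tsum_eq_zero_add]
  simp only [Nat.cast_zero, zero_mul, mul_zero, zero_add, Nat.cast_add_one, Nat.add_sub_cancel]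
  exact tsum_congr fun k => by ring

end EntirePowerSeries

section PerturbedOscillator

variable {u v q k k' : ℝ → ℝ} {D : Set ℝ}

lemma antitoneOn_mul_exp_neg_of_deriv_le_mul {f f' : ℝ → ℝ} (hD : Convex ℝ D)
    (hf : ∀ t ∈ D, HasDerivAt f (f' t) t) (hk : ∀ t ∈ D, HasDerivAt k (k' t) t)
    (hle : ∀ t ∈ D, f' t ≤ k' t * f t) : AntitoneOn (fun t => f t * Real.exp (-k t)) D := by
  have hderiv : ∀ t ∈ D, HasDerivAt (fun t => f t * Real.exp (-k t))
      ((f' t - k' t * f t) * Real.exp (-k t)) t := fun t ht =>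
    ((hf t ht).mul (hk t ht).fun_neg.exp).congr_deriv (by ring)
  refine antitoneOn_of_deriv_nonpos hD
    (fun t ht => (hderiv t ht).continuousAt.continuousWithinAt)
    (fun t ht => (hderiv t (interior_subset ht)).differentiableAt.differentiableWithinAt)
    fun t ht => ?_
  rw [(hderiv t (interior_subset ht)).deriv]
  exact mul_nonpos_of_nonpos_of_nonneg (sub_nonpos.2 (hle t (interior_subset ht)))
    (Real.exp_pos _).le

lemma antitoneOn_energy_mul_exp_neg (hD : Convex ℝ D)
    (hu : ∀ t ∈ D, HasDerivAt u (v t) t) (hv : ∀ t ∈ D, HasDerivAt v ((q t - 1) * u t) t)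
    (hk : ∀ t ∈ D, HasDerivAt k (k' t) t) (hq : ∀ t ∈ D, |q t| ≤ k' t) :
    AntitoneOn (fun t => (u t ^ 2 + v t ^ 2) * Real.exp (-k t)) D := by
  refine antitoneOn_mul_exp_neg_of_deriv_le_mul (f' := fun t => q t * (2 * u t * v t)) hD
    (fun t ht => (((hu t ht).fun_pow 2).add ((hv t ht).fun_pow 2)).congr_deriv (by ring)) hk
    fun t ht => ?_
  have h_am_gm : |2 * u t * v t| ≤ u t ^ 2 + v t ^ 2 :=
    abs_le.2 ⟨by nlinarith [sq_nonneg (u t + v t)], two_mul_le_add_sq _ _⟩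
  calc q t * (2 * u t * v t) ≤ |q t| * |2 * u t * v t| := by
        rw [← abs_mul]; exact le_abs_self _
    _ ≤ k' t * (u t ^ 2 + v t ^ 2) :=
        mul_le_mul (hq t ht) h_am_gm (abs_nonneg _) ((abs_nonneg _).trans (hq t ht))

lemma isBigO_one_of_perturbed_oscillator {a K : ℝ}
    (hu : ∀ t ∈ Ioi a, HasDerivAt u (v t) t)
    (hv : ∀ t ∈ Ioi a, HasDerivAt v ((q t - 1) * u t) t)
    (hk : ∀ t ∈ Ioi a, HasDerivAt k (k' t) t) (hq : ∀ t ∈ Ioi a, |q t| ≤ k' t)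
    (hK : ∀ t ∈ Ioi a, k t ≤ K) : u =O[atTop] (1 : ℝ → ℝ) := by
  have hanti := antitoneOn_energy_mul_exp_neg (convex_Ioi a) hu hv hk hq
  set E : ℝ → ℝ := fun t => (u t ^ 2 + v t ^ 2) * Real.exp (-k t)
  have ha : a < a + 1 := lt_add_one a
  have hsq : ∀ t ≥ a + 1, u t ^ 2 ≤ E (a + 1) * Real.exp K := fun t ht => by
    have hat : t ∈ Ioi a := ha.trans_le ht
    calc u t ^ 2 ≤ u t ^ 2 + v t ^ 2 := le_add_of_nonneg_right (sq_nonneg _)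
      _ = E t * Real.exp (k t) := by simp [E, mul_assoc, ← Real.exp_add]
      _ ≤ E (a + 1) * Real.exp K := by
        have : 0 ≤ E (a + 1) := by positivity
        gcongr
        exacts [hanti ha hat ht, hK t hat]
  refine IsBigO.of_pow two_ne_zero (IsBigO.of_bound (E (a + 1) * Real.exp K) ?_)
  filter_upwards [eventually_ge_atTop (a + 1)] with t ht
  simpa using hsq t ht

end PerturbedOscillator

lemma isBigO_mul_rpow_add {l : Filter ℝ} {f g : ℝ → ℝ} {α β : ℝ} (hl : ∀ᶠ x in l, 0 < x)
    (hf : f =O[l] (· ^ α)) (hg : g =O[l] (· ^ β)) :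
    (fun x => f x * g x) =O[l] (· ^ (α + β)) := by
  refine (hf.mul hg).congr' .rfl ?_
  filter_upwards [hl] with x hx using (Real.rpow_add hx α β).symm

lemma integrableOn_Ioi_abs_div_one_add {f : ℝ → ℝ} {α β : ℝ} (hf : ContinuousOn f (Ioi 0))
    (hzero : f =O[𝓝[>] 0] (· ^ α)) (hα : -1 < α) (htop : f =O[atTop] (· ^ β)) (hβ : β < 0) :
    IntegrableOn (fun x => |f x| / (1 + x)) (Ioi 0) := by
  have hloc : LocallyIntegrableOn (fun x => |f x| / (1 + x)) (Ioi 0) := by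
    refine (hf.abs.div (by fun_prop) fun x (hx : 0 < x) => ?_).locallyIntegrableOn
      measurableSet_Ioi
    positivity
  have hweight_zero : (fun x : ℝ => (1 + x)⁻¹) =O[𝓝[>] 0] (· ^ (0 : ℝ)) := by
    refine .of_bound' ?_
    filter_upwards [self_mem_nhdsWithin] with x (hx : 0 < x)
    rw [Real.rpow_zero, norm_one, Real.norm_of_nonneg (by positivity)]
    exact inv_le_one_of_one_le₀ (by linarith)
  have hweight_top : (fun x : ℝ => (1 + x)⁻¹) =O[atTop] (· ^ (-1 : ℝ)) := by
    refine .of_bound' ?_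
    filter_upwards [eventually_gt_atTop 0] with x hx
    rw [Real.rpow_neg_one, Real.norm_of_nonneg (by positivity), Real.norm_of_nonneg (by positivity)]
    gcongr
    linarith
  have hfzero : (fun x => |f x| / (1 + x)) =O[𝓝[>] 0] (· ^ (-(-α))) := by
    simpa [div_eq_mul_inv] using
      isBigO_mul_rpow_add (l := 𝓝[>] 0) self_mem_nhdsWithin hzero.abs_left hweight_zero
  have hftop : (fun x => |f x| / (1 + x)) =O[atTop] (· ^ (-(1 - β))) := by
    simpa [div_eq_mul_inv, sub_eq_add_neg] using
      isBigO_mul_rpow_add (eventually_gt_atTop 0) htop.abs_left hweight_top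
  simpa using mellin_convergent_of_isBigO_scalar (s := 1) hloc hftop (by linarith) hfzero
    (by linarith)

lemma Gamma_inv_eq_mul_Gamma_add_one_inv (x : ℝ) :
    (Real.Gamma x)⁻¹ = x * (Real.Gamma (x + 1))⁻¹ := by
  rcases eq_or_ne x 0 with rfl | hx
  · simp
  · rw [Real.Gamma_add_one hx, mul_inv, mul_inv_cancel_left₀ hx]

/-- The `k`-th Taylor coefficient `1 / (k! Γ(k + s + 1))` of the Bessel–Clifford function. At a pole
of `Γ` the conventions `Γ = 0` and `0⁻¹ = 0` give the correct value `0` of `1 / Γ`. -/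
noncomputable def besselCliffordCoeff (s : ℝ) (k : ℕ) : ℝ :=
  ((k.factorial : ℝ) * Real.Gamma (k + s + 1))⁻¹

/-- The Bessel–Clifford function `C_s(z) = Σ_k z^k / (k! Γ(k + s + 1))`, the entire factor of
`𝐉_s(t) = (t/2)^s C_s(-t²/4)`. -/
noncomputable def besselClifford (s z : ℝ) : ℝ := ∑' k, besselCliffordCoeff s k * z ^ k

section BesselClifford

variable (s : ℝ)

lemma add_one_mul_besselCliffordCoeff_add_one (k : ℕ) :
    (k + 1) * besselCliffordCoeff s (k + 1) = besselCliffordCoeff (s + 1) k := by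
  have hk : (k : ℝ) + 1 ≠ 0 := by positivity
  have harg : (k : ℝ) + 1 + s + 1 = k + (s + 1) + 1 := by ring
  simp only [besselCliffordCoeff, Nat.factorial_succ, Nat.cast_mul, Nat.cast_add_one, harg,
    mul_assoc, mul_inv ((k : ℝ) + 1), mul_inv_cancel_left₀ hk]

lemma besselCliffordCoeff_eq_mul (k : ℕ) :
    besselCliffordCoeff s k = (k + s + 1) * besselCliffordCoeff (s + 1) k := by
  rw [besselCliffordCoeff, besselCliffordCoeff, mul_inv, Gamma_inv_eq_mul_Gamma_add_one_inv,
    mul_inv, ← add_assoc (k : ℝ) s 1]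
  ring

lemma summable_besselCliffordCoeff_mul_pow (z : ℝ) :
    Summable fun k => besselCliffordCoeff s k * z ^ k := by
  refine .of_norm_bounded_eventually_nat (Real.summable_pow_div_factorial |z|) ?_
  filter_upwards [tendsto_natCast_atTop_atTop.eventually_ge_atTop (1 - s)] with k hk
  have harg : 2 ≤ (k : ℝ) + s + 1 := by linarith
  have hGamma : 1 ≤ Real.Gamma (k + s + 1) := by
    simpa only [Real.Gamma_two] using
      Real.Gamma_strictMonoOn_Ici.monotoneOn self_mem_Ici (mem_Ici.2 harg) harg
  have hcoeff : |besselCliffordCoeff s k| ≤ (k.factorial : ℝ)⁻¹ := by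
    rw [besselCliffordCoeff, abs_of_nonneg (by positivity)]
    gcongr
    exact le_mul_of_one_le_right (by positivity) hGamma
  rw [norm_mul, norm_pow, Real.norm_eq_abs, Real.norm_eq_abs, div_eq_inv_mul]
  gcongr

lemma hasDerivAt_besselClifford (z : ℝ) :
    HasDerivAt (besselClifford s) (besselClifford (s + 1) z) z := by
  refine (hasDerivAt_tsum_mul_pow (summable_besselCliffordCoeff_mul_pow s) z).congr_deriv ?_
  simp only [add_one_mul_besselCliffordCoeff_add_one, besselClifford]

lemma continuous_besselClifford : Continuous (besselClifford s) :=
  continuous_iff_continuousAt.2 fun z => (hasDerivAt_besselClifford s z).continuousAt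

lemma besselClifford_eq_add (z : ℝ) :
    besselClifford s z = (s + 1) * besselClifford (s + 1) z + z * besselClifford (s + 2) z := by
  have hsum := summable_besselCliffordCoeff_mul_pow
  have hcoeff : ∀ k : ℕ, besselCliffordCoeff s (k + 1) =
      (s + 1) * besselCliffordCoeff (s + 1) (k + 1) + besselCliffordCoeff (s + 2) k := fun k => by
    have hshift := add_one_mul_besselCliffordCoeff_add_one (s + 1) k
    rw [show s + 1 + 1 = s + 2 by ring] at hshift
    rw [besselCliffordCoeff_eq_mul, ← hshift]
    push_cast
    ring
  simp only [besselClifford]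
  rw [(hsum s z).tsum_eq_zero_add, (hsum (s + 1) z).tsum_eq_zero_add, mul_add, add_assoc,
    ← tsum_mul_left, ← tsum_mul_left, ← Summable.tsum_add]
  · congr 1
    · simp [besselCliffordCoeff_eq_mul s 0]
    · exact tsum_congr fun k => by rw [hcoeff]; ring
  · exact ((summable_nat_add_iff 1).2 (hsum (s + 1) z)).mul_left _
  · exact (hsum (s + 2) z).mul_left z

end BesselClifford

section BesselJ

variable (s : ℝ) {t : ℝ}

lemma besselJ_eq_rpow_mul_besselClifford (ht : 0 < t) :
    besselJ s t = (t / 2) ^ s * besselClifford s (-(t ^ 2 / 4)) := by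
  rw [besselJ, besselClifford, ← tsum_mul_left]
  refine tsum_congr fun k => ?_
  have hpow : (t / 2) ^ (2 * (k : ℝ)) = (t ^ 2 / 4) ^ k := by
    rw [Real.rpow_mul (by positivity), Real.rpow_natCast, Real.rpow_two]
    ring
  rw [Real.rpow_add (by positivity), hpow, besselCliffordCoeff, neg_pow (t ^ 2 / 4)]
  ring

lemma besselJ_add_one_eq_rpow_mul_besselClifford (ht : 0 < t) :
    besselJ (s + 1) t = (t / 2) ^ s * (t / 2 * besselClifford (s + 1) (-(t ^ 2 / 4))) := by
  rw [besselJ_eq_rpow_mul_besselClifford _ ht, Real.rpow_add_one (by positivity), mul_assoc]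

lemma besselJ_sub_one_add_besselJ_add_one (ht : 0 < t) :
    besselJ (s - 1) t + besselJ (s + 1) t = 2 * s / t * besselJ s t := by
  have hrec := besselClifford_eq_add (s - 1) (-(t ^ 2 / 4))
  rw [sub_add_cancel, show s - 1 + 2 = s + 1 by ring] at hrec
  rw [besselJ_eq_rpow_mul_besselClifford (s - 1) ht, besselJ_eq_rpow_mul_besselClifford s ht,
    besselJ_add_one_eq_rpow_mul_besselClifford s ht, Real.rpow_sub_one (by positivity), hrec]
  field_simp
  ring

lemma hasDerivAt_besselJ (ht : 0 < t) :
    HasDerivAt (besselJ s) (s / t * besselJ s t - besselJ (s + 1) t) t := by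
  have hrpow : HasDerivAt (fun t : ℝ => (t / 2) ^ s) (s / t * (t / 2) ^ s) t := by
    refine (((hasDerivAt_id' t).div_const 2).rpow_const (Or.inl (by positivity))).congr_deriv ?_
    rw [Real.rpow_sub_one (by positivity)]
    field_simp
  have harg : HasDerivAt (fun t : ℝ => -(t ^ 2 / 4)) (-(t / 2)) t :=
    ((hasDerivAt_pow 2 t).div_const 4).fun_neg.congr_deriv (by ring)
  have heq : besselJ s =ᶠ[𝓝 t] fun t => (t / 2) ^ s * besselClifford s (-(t ^ 2 / 4)) := by
    filter_upwards [lt_mem_nhds ht] with x hx using besselJ_eq_rpow_mul_besselClifford s hx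
  refine ((hrpow.mul ((hasDerivAt_besselClifford s _).comp t harg)).congr_of_eventuallyEq
    heq).congr_deriv ?_
  rw [besselJ_eq_rpow_mul_besselClifford s ht, besselJ_add_one_eq_rpow_mul_besselClifford s ht,
    Function.comp_apply]
  ring

lemma hasDerivAt_besselJ_add_one (ht : 0 < t) :
    HasDerivAt (besselJ (s + 1)) (besselJ s t - (s + 1) / t * besselJ (s + 1) t) t := by
  have hrec := besselJ_sub_one_add_besselJ_add_one (s + 1) ht
  rw [add_sub_cancel_right] at hrec
  exact (hasDerivAt_besselJ (s + 1) ht).congr_deriv (by linear_combination -hrec)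

lemma continuousOn_besselJ : ContinuousOn (besselJ s) (Ioi 0) :=
  fun _ ht => (hasDerivAt_besselJ s ht).continuousAt.continuousWithinAt

lemma isBigO_besselJ_nhdsGT_zero : besselJ s =O[𝓝[>] 0] (· ^ s) := by
  have hclifford : (fun t : ℝ => besselClifford s (-(t ^ 2 / 4))) =O[𝓝[>] 0] (1 : ℝ → ℝ) :=
    (((continuous_besselClifford s).comp (by fun_prop)).tendsto 0).mono_left nhdsWithin_le_nhds
      |>.isBigO_one ℝ
  have hrpow : (fun t : ℝ => (t / 2) ^ s) =O[𝓝[>] 0] (· ^ s) := by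
    refine (isBigO_const_mul_self ((2 : ℝ) ^ s)⁻¹ (· ^ s) _).congr' ?_ .rfl
    filter_upwards [self_mem_nhdsWithin] with t (ht : 0 < t)
    rw [Real.div_rpow ht.le zero_le_two, div_eq_inv_mul]
  refine (hrpow.mul hclifford).congr' ?_ (by simp)
  filter_upwards [self_mem_nhdsWithin] with t ht
    using (besselJ_eq_rpow_mul_besselClifford s ht).symm

lemma hasDerivAt_sqrt_mul_besselJ (ht : 0 < t) :
    HasDerivAt (fun t => √t * besselJ s t)
      (√t * ((s + 1 / 2) / t * besselJ s t - besselJ (s + 1) t)) t := by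
  refine ((Real.hasDerivAt_sqrt ht.ne').mul (hasDerivAt_besselJ s ht)).congr_deriv ?_
  field_simp
  rw [Real.sq_sqrt ht.le]
  ring

lemma hasDerivAt_deriv_sqrt_mul_besselJ (ht : 0 < t) :
    HasDerivAt (fun t => √t * ((s + 1 / 2) / t * besselJ s t - besselJ (s + 1) t))
      (((s ^ 2 - 1 / 4) / t ^ 2 - 1) * (√t * besselJ s t)) t := by
  have hcoeff : HasDerivAt (fun t => (s + 1 / 2) / t) (-(s + 1 / 2) / t ^ 2) t :=
    ((hasDerivAt_inv ht.ne').const_mul (s + 1 / 2)).congr_deriv (by ring)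
  refine ((Real.hasDerivAt_sqrt ht.ne').mul ((hcoeff.mul (hasDerivAt_besselJ s ht)).sub
    (hasDerivAt_besselJ_add_one s ht))).congr_deriv ?_
  simp only [Pi.mul_apply, Pi.sub_apply]
  field_simp
  rw [Real.sq_sqrt ht.le]
  ring

lemma isBigO_besselJ_atTop : besselJ s =O[atTop] (· ^ (-(1 / 2) : ℝ)) := by
  set c : ℝ := |s ^ 2 - 1 / 4|
  have hk : ∀ t ∈ Ioi (0 : ℝ), HasDerivAt (fun t => -(c / t)) (c / t ^ 2) t := fun t ht =>
    ((hasDerivAt_inv (ne_of_gt ht)).const_mul c).fun_neg.congr_deriv (by ring)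
  have hbounded : (fun t => √t * besselJ s t) =O[atTop] (1 : ℝ → ℝ) :=
    isBigO_one_of_perturbed_oscillator (K := 0)
      (fun t ht => hasDerivAt_sqrt_mul_besselJ s ht)
      (fun t ht => hasDerivAt_deriv_sqrt_mul_besselJ s ht) hk
      (fun t _ => by rw [abs_div, abs_of_nonneg (sq_nonneg t)])
      (fun t (ht : 0 < t) => neg_nonpos.2 (by positivity))
  refine ((isBigO_refl (fun t : ℝ => t ^ (-(1 / 2) : ℝ)) atTop).mul hbounded).congr' ?_
    (by simp)
  filter_upwards [eventually_gt_atTop 0] with t ht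
  rw [Real.rpow_neg ht.le, ← Real.sqrt_eq_rpow, inv_mul_cancel_left₀ (by positivity)]

end BesselJ

section BesselDiag

variable (s : ℝ) {x : ℝ}

lemma hasDerivAt_besselB (hx : 0 < x) :
    HasDerivAt (besselB s)
      ((s / √x * besselJ s √x - besselJ (s + 1) √x) * (1 / (2 * √x))) x :=
  (hasDerivAt_besselJ s (Real.sqrt_pos.2 hx)).comp x (Real.hasDerivAt_sqrt hx.ne')

lemma hasDerivAt_besselA (hx : 0 < x) :
    HasDerivAt (besselA s)
      ((√x * besselJ s √x - s * besselJ (s + 1) √x) * (1 / (2 * √x))) x := by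
  have hsqrt : 0 < √x := Real.sqrt_pos.2 hx
  have hmul : HasDerivAt (fun t => t * besselJ (s + 1) t)
      (√x * besselJ s √x - s * besselJ (s + 1) √x) √x :=
    ((hasDerivAt_id' √x).mul (hasDerivAt_besselJ_add_one s hsqrt)).congr_deriv
      (by field_simp; ring)
  exact hmul.comp x (Real.hasDerivAt_sqrt hx.ne')

lemma besselDiag_eq (hx : 0 < x) :
    besselDiag s x = (besselJ s √x ^ 2 - besselJ (s - 1) √x * besselJ (s + 1) √x) / 4 := by
  have hsqrt : 0 < √x := Real.sqrt_pos.2 hx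
  rw [eq_sub_of_add_eq (besselJ_sub_one_add_besselJ_add_one s hsqrt), besselDiag,
    (hasDerivAt_besselA s hx).deriv, (hasDerivAt_besselB s hx).deriv, besselA, besselB]
  field_simp
  ring

lemma continuousOn_besselDiag : ContinuousOn (besselDiag s) (Ioi 0) := by
  have hJ : ∀ r, ContinuousOn (fun x => besselJ r √x) (Ioi 0) := fun r =>
    (continuousOn_besselJ r).comp Real.continuous_sqrt.continuousOn fun _ => Real.sqrt_pos.2
  exact ((((hJ s).pow 2).sub ((hJ (s - 1)).mul (hJ (s + 1)))).div_const 4).congr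
    fun _ hx => besselDiag_eq s hx

lemma isBigO_besselDiag_of_isBigO_besselJ {l l' : Filter ℝ} {α β p : ℝ}
    (hl : ∀ᶠ x in l, 0 < x) (hsqrt : Tendsto Real.sqrt l l')
    (hself : besselJ s =O[l'] (· ^ p)) (hpred : besselJ (s - 1) =O[l'] (· ^ α))
    (hsucc : besselJ (s + 1) =O[l'] (· ^ β)) (hadd : α + β = p + p) :
    besselDiag s =O[l] (· ^ p) := by
  have hmul_self : ∀ᶠ x : ℝ in l, √x ^ p * √x ^ p = x ^ p := by
    filter_upwards [hl] with x hx
    rw [← Real.mul_rpow (Real.sqrt_nonneg x) (Real.sqrt_nonneg x), Real.mul_self_sqrt hx.le]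
  have hmul : ∀ᶠ x : ℝ in l, √x ^ α * √x ^ β = x ^ p := by
    filter_upwards [hl, hmul_self] with x hx hx_self
    rw [← Real.rpow_add (Real.sqrt_pos.2 hx), hadd, Real.rpow_add (Real.sqrt_pos.2 hx), hx_self]
  replace hself := hself.comp_tendsto hsqrt
  have hsq := (hself.mul hself).congr' .rfl hmul_self
  have hprod := ((hpred.comp_tendsto hsqrt).mul (hsucc.comp_tendsto hsqrt)).congr' .rfl hmul
  refine ((hsq.sub hprod).const_mul_left (1 / 4)).congr' ?_ .rfl
  filter_upwards [hl] with x hx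
  simp only [besselDiag_eq s hx, Function.comp_apply]
  ring

lemma isBigO_besselDiag_nhdsGT_zero : besselDiag s =O[𝓝[>] 0] (· ^ s) := by
  have hsqrt : Tendsto Real.sqrt (𝓝[>] 0) (𝓝[>] 0) := by
    refine tendsto_nhdsWithin_iff.2 ⟨?_, ?_⟩
    · simpa using (Real.continuous_sqrt.tendsto 0).mono_left nhdsWithin_le_nhds
    · filter_upwards [self_mem_nhdsWithin] with x hx using Real.sqrt_pos.2 hx
  exact isBigO_besselDiag_of_isBigO_besselJ s self_mem_nhdsWithin hsqrt
    (isBigO_besselJ_nhdsGT_zero s) (isBigO_besselJ_nhdsGT_zero (s - 1))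
    (isBigO_besselJ_nhdsGT_zero (s + 1)) (by ring)

lemma isBigO_besselDiag_atTop : besselDiag s =O[atTop] (· ^ (-(1 / 2) : ℝ)) :=
  isBigO_besselDiag_of_isBigO_besselJ s (eventually_gt_atTop 0) Real.tendsto_sqrt_atTop
    (isBigO_besselJ_atTop s) (isBigO_besselJ_atTop (s - 1)) (isBigO_besselJ_atTop (s + 1)) rfl

end BesselDiag

/-- For every `s > −1` the diagonal of the Bessel kernel satisfies
`∫_0^∞ |d_s(x)| / (1+x) dx < ∞`. -/
theorem besselDiag_integrable (s : ℝ) (hs : -1 < s) :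
    IntegrableOn (fun x : ℝ => |besselDiag s x| / (1 + x)) (Set.Ioi (0 : ℝ)) :=
  integrableOn_Ioi_abs_div_one_add (continuousOn_besselDiag s) (isBigO_besselDiag_nhdsGT_zero s) hs
    (isBigO_besselDiag_atTop s) (by norm_num)
end
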